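/- arXiv:1801.09647 — 4 statements merged into one kernel-verified Lean document; each statement's English description precedes it below -/
import Mathlib

section
/- Fix n ≥ 1 and nonnegative integers d₁⁺,…,dₙ⁺ (in-degrees) and d₁⁻,…,dₙ⁻ (out-degrees) with Σₖ dₖ⁺ = Σₖ dₖ⁻ ≥ 1, and set dₖ = dₖ⁺ + dₖ⁻. Let T = {(k,j) : k ∈ {1,…,n}, 1 ≤ j ≤ dₖ⁻} be the set of tail half-edges and H = {(k,i) : k ∈ {1,…,n}, 1 ≤ i ≤ dₖ⁺} the set of head half-edges, and let N be a uniformly random bijection from T to H (this is the random configuration model conditioned on the given in- and out-degrees). Let G(N) be the directed multigraph on {1,…,n} with one edge from k to l for every t = (k,j) ∈ T with N(t) = (l,i), and let m(G(N)) = ν(G(N))/n, where ν(G(N)) is the maximum size of a set S ⊆ T such that the first coordinates of the elements of S are pairwise distinct and the first coordinates of their images {N(t) : t ∈ S} are pairwise distinct. Then for every ε > 0, P(|m(G(N)) − E[m(G(N))]| > ε) ≤ 2·exp(−ε²n²/(8·Σ_{k=1}^n dₖ²)). -/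
/-!
The matching number `ν(G(N))` changes by at most `1` when the images of two tail half-edges are
exchanged (`confNu_le_swap`): if both half-edges lie in a matching, the matching survives because
the sets of tails and of heads it uses are unchanged; otherwise at most one of them lies in it, and
removing that one leaves a matching.

Any function of a uniformly random permutation of `m` points with this Lipschitz property is
sub-Gaussian (`perm_mgf_le`). The proof is by induction on `m`, revealing the image of one point:
the conditional means given that image are pairwise within `2` of each other, so they contribute a
factor `cosh (2 l) ≤ exp (2 l²)` to the moment generating function. Chernoff's bound then gives
`P(|f - E f| > s) ≤ 2 exp (-s² / (8 m))` (`perm_tail_le`).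

Numbering the half-edges turns `N` into a permutation of `m = ∑ dOut` points. The theorem follows
with `s = ε n`, since `m ≤ ∑ d_k ≤ ∑ d_k²`.
-/

open scoped Classical

/-- The maximum size of a directed matching of the configuration-model graph `G(N)`
determined by the bijection `N` from tail half-edges to head half-edges:
the maximum size of a set `S` of tail half-edges whose vertices (first coordinates)
are pairwise distinct and whose images' vertices are pairwise distinct. -/
noncomputable def confNu {n : ℕ} {dOut dIn : Fin n → ℕ}
    (N : (Σ k : Fin n, Fin (dOut k)) ≃ (Σ k : Fin n, Fin (dIn k))) : ℕ :=
  sSup {t | ∃ S : Finset (Σ k : Fin n, Fin (dOut k)),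
    (∀ a ∈ S, ∀ b ∈ S, a.1 = b.1 → a = b) ∧
    (∀ a ∈ S, ∀ b ∈ S, (N a).1 = (N b).1 → a = b) ∧ S.card = t}

/-- The directed matching ratio `m(G(N)) = ν(G(N))/n` of the configuration-model graph. -/
noncomputable def confRatio {n : ℕ} {dOut dIn : Fin n → ℕ}
    (N : (Σ k : Fin n, Fin (dOut k)) ≃ (Σ k : Fin n, Fin (dIn k))) : ℝ :=
  (confNu N : ℝ) / n

/-- The mean `E[m(G(N))]` of the directed matching ratio over the uniformly random
bijection `N` from tail half-edges to head half-edges. -/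
noncomputable def confMean (n : ℕ) (dOut dIn : Fin n → ℕ) : ℝ :=
  (∑ N : (Σ k : Fin n, Fin (dOut k)) ≃ (Σ k : Fin n, Fin (dIn k)), confRatio N) /
    (Fintype.card ((Σ k : Fin n, Fin (dOut k)) ≃ (Σ k : Fin n, Fin (dIn k))))

section

open Equiv

/-- Hoeffding's lemma for the uniform measure on a finite type and a centred variable bounded
by `2`: the factor `exp (2 l²)` bounds `cosh (2 l)`. -/
theorem sum_exp_le_of_abs_le_two {ι : Type*} [Fintype ι] (X : ι → ℝ) (hX : ∑ i, X i = 0)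
    (hb : ∀ i, |X i| ≤ 2) (l : ℝ) :
    ∑ i, Real.exp (l * X i) ≤ Fintype.card ι * Real.exp (2 * l ^ 2) := by
  have h1 : ∀ i, Real.exp (l * X i) ≤
      Real.cosh (2 * l) + X i * (Real.sinh (2 * l) / 2) := by
    intro i
    have h := Real.exp_mul_le_cosh_add_mul_sinh (t := X i / 2)
      (by rw [abs_div, abs_two]; linarith [hb i]) (2 * l)
    have e : X i / 2 * (2 * l) = l * X i := by ring
    rw [e] at h
    linarith
  calc ∑ i, Real.exp (l * X i)
      ≤ ∑ i, (Real.cosh (2 * l) + X i * (Real.sinh (2 * l) / 2)) :=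
        Finset.sum_le_sum fun i _ => h1 i
    _ = Fintype.card ι * Real.cosh (2 * l) := by
        rw [Finset.sum_add_distrib, ← Finset.sum_mul, hX]
        simp
    _ ≤ Fintype.card ι * Real.exp (2 * l ^ 2) := by
        gcongr
        refine (Real.cosh_le_exp_half_sq _).trans (Real.exp_le_exp.2 ?_)
        apply le_of_eq; ring

/-- The mean of `f` over a uniformly random permutation of `Fin m`. -/
noncomputable def permMean {m : ℕ} (f : Perm (Fin m) → ℝ) : ℝ :=
  (∑ σ, f σ) / (m.factorial : ℝ)

theorem decomposeFin_symm_mul_swap {m : ℕ} (p : Fin (m + 1)) (e : Perm (Fin m)) (x y : Fin m) :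
    Perm.decomposeFin.symm (p, e * swap x y) =
      Perm.decomposeFin.symm (p, e) * swap x.succ y.succ := by
  ext i
  congr 1
  refine Fin.cases ?_ (fun i => ?_) i
  · rw [Perm.mul_apply, swap_apply_of_ne_of_ne (Fin.succ_ne_zero x).symm (Fin.succ_ne_zero y).symm]
    simp
  · have h : swap x.succ y.succ i.succ = (swap x y i).succ :=
      ((Fin.succ_injective m).swap_apply x y i)
    rw [Perm.mul_apply, h, Perm.decomposeFin_symm_apply_succ, Perm.decomposeFin_symm_apply_succ,
      Perm.mul_apply]

/-- Two permutations of `Fin (m + 1)` with the same residual permutation `e`, sending `0` to `p`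
and to `0` respectively, differ by one transposition. -/
theorem decomposeFin_symm_eq_mul_swap {m : ℕ} (p : Fin (m + 1)) (e : Perm (Fin m)) :
    ∃ x y, Perm.decomposeFin.symm (p, e) = Perm.decomposeFin.symm (0, e) * swap x y := by
  refine ⟨(Perm.decomposeFin.symm (0, e))⁻¹ 0, (Perm.decomposeFin.symm (0, e))⁻¹ p, ?_⟩
  rw [← swap_mul_eq_mul_swap (Perm.decomposeFin.symm (0, e)) 0 p]
  ext i
  refine Fin.cases ?_ (fun i => ?_) i <;> simp

theorem permMean_succ {m : ℕ} (f : Perm (Fin (m + 1)) → ℝ) :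
    permMean f =
      (∑ p, permMean fun e => f (Perm.decomposeFin.symm (p, e))) / ((m + 1 : ℕ) : ℝ) := by
  unfold permMean
  rw [← Finset.sum_div, ← Equiv.sum_comp Perm.decomposeFin.symm, Fintype.sum_prod_type,
    div_div, Nat.factorial_succ]
  push_cast
  rw [mul_comm ((m : ℝ) + 1)]

theorem abs_permMean_sub_le {m : ℕ} (f g : Perm (Fin m) → ℝ) (h : ∀ σ, |f σ - g σ| ≤ 1) :
    |permMean f - permMean g| ≤ 1 := by
  have hm : (0 : ℝ) < m.factorial := by exact_mod_cast m.factorial_pos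
  unfold permMean
  rw [← sub_div, ← Finset.sum_sub_distrib, abs_div, abs_of_pos hm, div_le_one hm]
  refine (Finset.abs_sum_le_sum_abs _ _).trans ((Finset.sum_le_sum fun σ _ => h σ).trans ?_)
  simp [Fintype.card_perm]

/-- A function of a uniformly random permutation of `m` points that changes by at most `1` under a
transposition has the moment generating function bound `E exp (l (f - E f)) ≤ exp (2 l² m)`.
In the inductive step, `g p` is the conditional mean of `f` given that `0` is sent to `p`. -/
theorem perm_mgf_le {m : ℕ} (f : Perm (Fin m) → ℝ)
    (hf : ∀ σ x y, |f (σ * swap x y) - f σ| ≤ 1) (l : ℝ) :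
    ∑ σ, Real.exp (l * (f σ - permMean f)) ≤ m.factorial * Real.exp (2 * l ^ 2 * m) := by
  induction m with
  | zero => simp [permMean]
  | succ m ih =>
    set g : Fin (m + 1) → ℝ := fun p => permMean fun e => f (Perm.decomposeFin.symm (p, e))
      with hg
    have hm : ((m + 1 : ℕ) : ℝ) ≠ 0 := by positivity
    have hmean : permMean f = (∑ p, g p) / ((m + 1 : ℕ) : ℝ) := permMean_succ f
    have hg0 : ∀ p, |g p - g 0| ≤ 1 := by
      intro p
      refine abs_permMean_sub_le _ _ fun e => ?_
      obtain ⟨x, y, hxy⟩ := decomposeFin_symm_eq_mul_swap p e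
      rw [hxy]
      exact hf _ _ _
    have hmean0 : |permMean f - g 0| ≤ 1 := by
      have e : permMean f - g 0 = (∑ p, (g p - g 0)) / ((m + 1 : ℕ) : ℝ) := by
        rw [Finset.sum_sub_distrib, sub_div, hmean]
        simp only [Finset.sum_const, Finset.card_univ, Fintype.card_fin, nsmul_eq_mul]
        rw [mul_div_cancel_left₀ _ hm]
      rw [e, abs_div, abs_of_nonneg (Nat.cast_nonneg (α := ℝ) (m + 1)), div_le_one (by positivity)]
      refine (Finset.abs_sum_le_sum_abs _ _).trans
        ((Finset.sum_le_sum fun p _ => hg0 p).trans ?_)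
      simp
    have hstep : ∑ p, Real.exp (l * (g p - permMean f)) ≤
        ((m + 1 : ℕ) : ℝ) * Real.exp (2 * l ^ 2) := by
      have h := sum_exp_le_of_abs_le_two (fun p => g p - permMean f) ?_ ?_ l
      · simpa using h
      · rw [Finset.sum_sub_distrib, hmean]
        simp only [Finset.sum_const, Finset.card_univ, Fintype.card_fin, nsmul_eq_mul]
        rw [mul_div_cancel₀ _ hm, sub_self]
      · intro p
        have h1 := abs_le.1 (hg0 p)
        have h2 := abs_le.1 hmean0
        rw [abs_le]
        constructor <;> linarith [h1.1, h1.2, h2.1, h2.2]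
    calc ∑ σ, Real.exp (l * (f σ - permMean f))
        = ∑ p, Real.exp (l * (g p - permMean f)) *
            ∑ e, Real.exp (l * (f (Perm.decomposeFin.symm (p, e)) - g p)) := by
          rw [← Equiv.sum_comp Perm.decomposeFin.symm, Fintype.sum_prod_type]
          refine Finset.sum_congr rfl fun p _ => ?_
          rw [Finset.mul_sum]
          refine Finset.sum_congr rfl fun e _ => ?_
          rw [← Real.exp_add]
          congr 1
          ring
      _ ≤ ∑ p, Real.exp (l * (g p - permMean f)) *
            (m.factorial * Real.exp (2 * l ^ 2 * m)) := by
          refine Finset.sum_le_sum fun p _ => mul_le_mul_of_nonneg_left ?_ (Real.exp_pos _).le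
          refine ih (fun e => f (Perm.decomposeFin.symm (p, e))) fun e x y => ?_
          rw [decomposeFin_symm_mul_swap]
          exact hf _ _ _
      _ ≤ ((m + 1 : ℕ) : ℝ) * Real.exp (2 * l ^ 2) *
            (m.factorial * Real.exp (2 * l ^ 2 * m)) := by
          rw [← Finset.sum_mul]
          gcongr
      _ = (m + 1).factorial * Real.exp (2 * l ^ 2 * (m + 1 : ℕ)) := by
          rw [Nat.factorial_succ]
          push_cast
          rw [mul_add, Real.exp_add, mul_one]
          ring

/-- Chernoff's bound applied to `perm_mgf_le` with the optimal parameter `l = s / (4 m)`. -/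
theorem perm_tail_le {m : ℕ} (hm : 1 ≤ m) (f : Perm (Fin m) → ℝ)
    (hf : ∀ σ x y, |f (σ * swap x y) - f σ| ≤ 1) (s : ℝ) (hs : 0 < s) :
    ((Finset.univ.filter fun σ => s < |f σ - permMean f|).card : ℝ) ≤
      m.factorial * (2 * Real.exp (-s ^ 2 / (8 * m))) := by
  have hm0 : (0 : ℝ) < m := by exact_mod_cast hm
  set l : ℝ := s / (4 * m) with hl
  have hl0 : 0 < l := by positivity
  have h1 := perm_mgf_le f hf l
  have h2 := perm_mgf_le f hf (-l)
  have h3 : ((Finset.univ.filter fun σ => s < |f σ - permMean f|).card : ℝ) * Real.exp (l * s) ≤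
      ∑ σ, (Real.exp (l * (f σ - permMean f)) + Real.exp (-l * (f σ - permMean f))) := by
    rw [← nsmul_eq_mul, ← Finset.sum_const]
    refine (Finset.sum_le_sum fun σ hσ => ?_).trans
      (Finset.sum_le_sum_of_subset_of_nonneg (Finset.filter_subset _ _)
        fun σ _ _ => by positivity)
    have hσ' := (Finset.mem_filter.1 hσ).2
    rcases lt_abs.1 hσ' with h | h
    · have : Real.exp (l * s) ≤ Real.exp (l * (f σ - permMean f)) :=
        Real.exp_le_exp.2 (mul_le_mul_of_nonneg_left h.le hl0.le)
      linarith [Real.exp_pos (-l * (f σ - permMean f))]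
    · have : Real.exp (l * s) ≤ Real.exp (-l * (f σ - permMean f)) :=
        Real.exp_le_exp.2 (by nlinarith)
      linarith [Real.exp_pos (l * (f σ - permMean f))]
  rw [Finset.sum_add_distrib] at h3
  have h4 : -s ^ 2 / (8 * m) = 2 * l ^ 2 * m - l * s := by
    rw [hl]; field_simp; ring
  rw [h4, Real.exp_sub, ← mul_div_assoc, ← mul_div_assoc, le_div_iff₀ (Real.exp_pos _)]
  rw [neg_sq] at h2
  linarith

theorem confNu_bddAbove {n : ℕ} {dOut dIn : Fin n → ℕ}
    (N : (Σ k : Fin n, Fin (dOut k)) ≃ (Σ k : Fin n, Fin (dIn k))) :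
    BddAbove {t | ∃ S : Finset (Σ k : Fin n, Fin (dOut k)),
      (∀ a ∈ S, ∀ b ∈ S, a.1 = b.1 → a = b) ∧
      (∀ a ∈ S, ∀ b ∈ S, (N a).1 = (N b).1 → a = b) ∧ S.card = t} := by
  refine ⟨Fintype.card (Σ k : Fin n, Fin (dOut k)), ?_⟩
  rintro t ⟨S, -, -, rfl⟩
  exact Finset.card_le_univ S

/-- Exchanging the images of two tail half-edges lowers the matching number by at most `1`. When
both half-edges lie in a matching, the whole matching survives the exchange. -/
theorem confNu_le_swap {n : ℕ} {dOut dIn : Fin n → ℕ}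
    (N : (Σ k : Fin n, Fin (dOut k)) ≃ (Σ k : Fin n, Fin (dIn k)))
    (a b : Σ k : Fin n, Fin (dOut k)) :
    confNu N ≤ confNu ((swap a b).trans N) + 1 := by
  have hle : ∀ S : Finset (Σ k : Fin n, Fin (dOut k)),
      (∀ x ∈ S, ∀ y ∈ S, x.1 = y.1 → x = y) →
      (∀ x ∈ S, ∀ y ∈ S, (((swap a b).trans N) x).1 = (((swap a b).trans N) y).1 → x = y) →
      S.card ≤ confNu ((swap a b).trans N) :=
    fun S h1 h2 => le_csSup (confNu_bddAbove _) ⟨S, h1, h2, rfl⟩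
  refine csSup_le ⟨0, ∅, by simp, by simp, rfl⟩ ?_
  rintro t ⟨S, hT, hH, rfl⟩
  -- If the swap maps `R ⊆ S` into `S`, then `R` is a matching for the new bijection.
  have key : ∀ R ⊆ S, (∀ x ∈ R, swap a b x ∈ S) →
      R.card ≤ confNu ((swap a b).trans N) := fun R hR hsw =>
    hle R (fun x hx y hy => hT x (hR hx) y (hR hy)) fun x hx y hy hxy =>
      (swap a b).injective (hH _ (hsw x hx) _ (hsw y hy) hxy)
  by_cases ha : a ∈ S
  · by_cases hb : b ∈ S
    · refine (key S subset_rfl fun x hx => ?_).trans (Nat.le_succ _)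
      rw [swap_apply_def]
      split_ifs
      exacts [hb, ha, hx]
    · have h := key (S.erase a) (Finset.erase_subset _ _) fun x hx => by
        have hxS := Finset.mem_of_mem_erase hx
        have hxb : x ≠ b := fun h => hb (h ▸ hxS)
        rwa [swap_apply_of_ne_of_ne (Finset.ne_of_mem_erase hx) hxb]
      have := Finset.pred_card_le_card_erase (s := S) (a := a)
      omega
  · have h := key (S.erase b) (Finset.erase_subset _ _) fun x hx => by
      have hxS := Finset.mem_of_mem_erase hx
      have hxa : x ≠ a := fun h => ha (h ▸ hxS)
      rwa [swap_apply_of_ne_of_ne hxa (Finset.ne_of_mem_erase hx)]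
    have := Finset.pred_card_le_card_erase (s := S) (a := b)
    omega

theorem abs_confNu_swap_sub_le {n : ℕ} {dOut dIn : Fin n → ℕ}
    (N : (Σ k : Fin n, Fin (dOut k)) ≃ (Σ k : Fin n, Fin (dIn k)))
    (a b : Σ k : Fin n, Fin (dOut k)) :
    |(confNu ((swap a b).trans N) : ℝ) - confNu N| ≤ 1 := by
  have h1 := confNu_le_swap N a b
  have h2 := confNu_le_swap ((swap a b).trans N) a b
  have e : (swap a b).trans ((swap a b).trans N) = N := by
    rw [← Equiv.trans_assoc, swap_swap, Equiv.refl_trans]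
  rw [e] at h2
  have h1' : (confNu N : ℝ) ≤ confNu ((swap a b).trans N) + 1 := by exact_mod_cast h1
  have h2' : (confNu ((swap a b).trans N) : ℝ) ≤ confNu N + 1 := by exact_mod_cast h2
  rw [abs_le]
  constructor <;> linarith

end

/-- Concentration of the directed matching ratio for the random configuration model
conditioned on the in-degrees `dIn` and out-degrees `dOut`: if `N` is a uniformly random
bijection from tail half-edges to head half-edges and `d k = dIn k + dOut k`, then for
every `ε > 0`, `P(|m(G(N)) − E[m(G(N))]| > ε) ≤ 2·exp(−ε²n²/(8·Σ_k (d k)²))`. -/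
theorem configuration_model_fixed_in_out_degrees_concentration
    (n : ℕ) (hn : 1 ≤ n) (dIn dOut : Fin n → ℕ)
    (hbal : ∑ k, dIn k = ∑ k, dOut k) (hpos : 1 ≤ ∑ k, dOut k) (ε : ℝ) (hε : 0 < ε) :
    (((Finset.univ.filter
        (fun N : (Σ k : Fin n, Fin (dOut k)) ≃ (Σ k : Fin n, Fin (dIn k)) =>
          ε < |confRatio N - confMean n dOut dIn|)).card : ℝ) /
      (Fintype.card ((Σ k : Fin n, Fin (dOut k)) ≃ (Σ k : Fin n, Fin (dIn k)))) ≤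
    2 * Real.exp (-(ε ^ 2 * (n : ℝ) ^ 2) / (8 * ∑ k, (((dIn k + dOut k : ℕ)) : ℝ) ^ 2))) := by
  obtain ⟨M, hM⟩ : ∃ M, M = ∑ k, dOut k := ⟨_, rfl⟩
  have hn0 : (0 : ℝ) < n := by exact_mod_cast hn
  have hM1 : 1 ≤ M := hM ▸ hpos
  let eT : (Σ k : Fin n, Fin (dOut k)) ≃ Fin M :=
    Fintype.equivFinOfCardEq (by simp [hM])
  let eH : (Σ k : Fin n, Fin (dIn k)) ≃ Fin M :=
    Fintype.equivFinOfCardEq (by simp [hM, hbal])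
  let E : Equiv.Perm (Fin M) ≃
      ((Σ k : Fin n, Fin (dOut k)) ≃ (Σ k : Fin n, Fin (dIn k))) :=
    Equiv.equivCongr eT.symm eH.symm
  let f : Equiv.Perm (Fin M) → ℝ := fun σ => confNu (E σ)
  have hf : ∀ σ x y, |f (σ * Equiv.swap x y) - f σ| ≤ 1 := by
    intro σ x y
    have e : E (σ * Equiv.swap x y) =
        (Equiv.swap (eT.symm x) (eT.symm y)).trans (E σ) := by
      apply Equiv.ext
      intro t
      have h : eT (Equiv.swap (eT.symm x) (eT.symm y) t) = Equiv.swap x y (eT t) := by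
        rw [← Equiv.eq_symm_apply]
        have := eT.symm.injective.swap_apply x y (eT t)
        rw [Equiv.symm_apply_apply] at this
        exact this
      simp [E, Equiv.equivCongr, h]
    simp only [f, e]
    exact abs_confNu_swap_sub_le _ _ _
  have hcard : Fintype.card ((Σ k : Fin n, Fin (dOut k)) ≃ (Σ k : Fin n, Fin (dIn k))) =
      M.factorial := by
    rw [← Fintype.card_congr E, Fintype.card_perm, Fintype.card_fin]
  have hmean : confMean n dOut dIn = permMean f / n := by
    unfold confMean permMean confRatio
    rw [hcard, ← Finset.sum_div, ← Equiv.sum_comp E, div_right_comm]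
  have hfilter : (Finset.univ.filter
      (fun N : (Σ k : Fin n, Fin (dOut k)) ≃ (Σ k : Fin n, Fin (dIn k)) =>
        ε < |confRatio N - confMean n dOut dIn|)).card =
      (Finset.univ.filter fun σ => ε * n < |f σ - permMean f|).card := by
    symm
    refine Finset.card_bij (fun σ _ => E σ) ?_ (fun _ _ _ _ h => E.injective h) ?_
    all_goals
      have hiff : ∀ σ, ε < |confRatio (E σ) - confMean n dOut dIn| ↔
          ε * n < |f σ - permMean f| := by
        intro σ
        rw [hmean]
        unfold confRatio
        rw [← sub_div, abs_div, abs_of_pos hn0, lt_div_iff₀ hn0]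
    · intro σ hσ
      simpa [hiff] using hσ
    · intro N hN
      refine ⟨E.symm N, ?_, E.apply_symm_apply N⟩
      have := hiff (E.symm N)
      rw [E.apply_symm_apply] at this
      simpa [← this] using hN
  have htail := perm_tail_le hM1 f hf (ε * n) (by positivity)
  have hfac : (0 : ℝ) < M.factorial := by exact_mod_cast M.factorial_pos
  have hM0 : (0 : ℝ) < M := by exact_mod_cast hM1
  have hsum : (M : ℝ) ≤ ∑ k, (((dIn k + dOut k : ℕ)) : ℝ) ^ 2 := by
    have h : M ≤ ∑ k, (dIn k + dOut k) ^ 2 := by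
      rw [hM]
      exact Finset.sum_le_sum fun k _ =>
        (Nat.le_add_left _ _).trans (Nat.le_self_pow two_ne_zero _)
    exact_mod_cast h
  rw [hcard, hfilter, div_le_iff₀ hfac, mul_comm _ (M.factorial : ℝ)]
  refine htail.trans ?_
  rw [mul_pow, neg_div, neg_div]
  gcongr
end

section
/- Fix n ≥ 1 and nonnegative integers d₁,…,dₙ whose sum is even and positive. Let ℰ = {(k,j) : k ∈ {1,…,n}, 1 ≤ j ≤ dₖ} be the set of half-edges. Choose uniformly at random a subset E_T ⊆ ℰ with |E_T| = |ℰ|/2 and, conditionally on E_T, a uniformly random bijection N : E_T → ℰ∖E_T. Let G be the directed multigraph on {1,…,n} with one edge from k to l for every t = (k,j) ∈ E_T with N(t) = (l,i) (this is the random configuration model conditioned on the total degrees d₁,…,dₙ, with independent uniform edge orientations). Then the directed matching ratio m(G) satisfies, for every ε > 0, P(|m(G) − E[m(G)]| > ε) ≤ 2·exp(−ε²n²/(32·Σ_{k=1}^n dₖ²)). -/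
/-!
The configuration is generated from a uniformly random permutation of the half-edges: the
permutations act on the configurations `(A, N)` by relabelling half-edges, the action is
transitive, so for a fixed base point `ω₀` the orbit map `σ ↦ σ • ω₀` sends the uniform measure to
the uniform measure (`card_mul_sum_permute`).

Relabelling by a transposition `(a b)` only affects the edges containing `a` or `b`, of which there
are at most two, so it changes the matching number by at most two (`abs_nu_sub_le`).

A function on the permutations of an `N`-element set that changes by at most `c` under left
multiplication by a transposition satisfies `E exp (t (f - E f)) ≤ exp (2 c² t² N)`
(`sum_exp_perm_le`). The proof is by induction on `N`: splitting off one point writes a permutation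
as a transposition `(* p)` times a permutation of the other points, and the conditional means given
`p` are within `c` of the one with `p = *`, so their deviations are at most `2 c` and Hoeffding's
inequality `E exp (t Z) ≤ cosh (2 c t) ≤ exp (2 c² t²)` applies.

With `c = 2 / n` and `N = ∑ d k ≤ ∑ (d k)²`, the Chernoff bound for both tails gives the result.
-/

open scoped Classical

/-- Sample space of the directed configuration model with prescribed total degrees:
a uniformly random half `A` of the half-edge set (the tail-type half-edges) together
with a uniformly random bijection from `A` to its complement (the head-type half-edges). -/
def TotalDegConf (n : ℕ) (d : Fin n → ℕ) : Type :=
  Σ A : {A : Finset (Σ k : Fin n, Fin (d k)) //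
      A.card = Fintype.card (Σ k : Fin n, Fin (d k)) / 2},
    ({x : Σ k : Fin n, Fin (d k) // x ∈ A.1} ≃ {x : Σ k : Fin n, Fin (d k) // x ∉ A.1})

noncomputable instance (n : ℕ) (d : Fin n → ℕ) : Fintype (TotalDegConf n d) := by
  unfold TotalDegConf; infer_instance

/-- The maximum size of a directed matching of the configuration-model graph determined
by the outcome `ω = (A, N)`: the maximum size of a set `S` of tail half-edges whose
vertices are pairwise distinct and whose images' vertices are pairwise distinct. -/
noncomputable def totalDegConfNu {n : ℕ} {d : Fin n → ℕ} (ω : TotalDegConf n d) : ℕ :=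
  sSup {t | ∃ S : Finset {x : Σ k : Fin n, Fin (d k) // x ∈ ω.1.1},
    (∀ a ∈ S, ∀ b ∈ S, a.1.1 = b.1.1 → a = b) ∧
    (∀ a ∈ S, ∀ b ∈ S, (ω.2 a).1.1 = (ω.2 b).1.1 → a = b) ∧ S.card = t}

/-- The directed matching ratio `m(G) = ν(G)/n` of the configuration-model graph. -/
noncomputable def totalDegConfRatio {n : ℕ} {d : Fin n → ℕ} (ω : TotalDegConf n d) : ℝ :=
  (totalDegConfNu ω : ℝ) / n

/-- The mean `E[m(G)]` of the directed matching ratio. -/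
noncomputable def totalDegConfMean (n : ℕ) (d : Fin n → ℕ) : ℝ :=
  (∑ ω : TotalDegConf n d, totalDegConfRatio ω) / (Fintype.card (TotalDegConf n d))

/-! ### Concentration on the permutations of a finite set -/

/-- Hoeffding's inequality for a centred bounded function on a finite uniform space. -/
lemma sum_exp_le_of_sum_eq_zero {ι : Type*} [Fintype ι] (Z : ι → ℝ) (b t : ℝ) (hb : 0 < b)
    (hZ : ∑ i, Z i = 0) (hbd : ∀ i, |Z i| ≤ b) :
    ∑ i, Real.exp (t * Z i) ≤ Fintype.card ι * Real.exp (t ^ 2 * b ^ 2 / 2) := by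
  have key : ∀ i, Real.exp (t * Z i) ≤
      Real.cosh (t * b) + Z i * (Real.sinh (t * b) / b) := by
    intro i
    obtain ⟨h1, h2⟩ := abs_le.mp (hbd i)
    -- `t * Z i` is the convex combination of `t * b` and `-(t * b)` with weights `(b ± Z i) / (2 b)`.
    have h := convexOn_exp.2 (Set.mem_univ (t * b)) (Set.mem_univ (-(t * b)))
      (show 0 ≤ (b + Z i) / (2 * b) from div_nonneg (by linarith) (by linarith))
      (show 0 ≤ (b - Z i) / (2 * b) from div_nonneg (by linarith) (by linarith))
      (by field_simp; ring)
    simp only [smul_eq_mul] at h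
    have e1 : (b + Z i) / (2 * b) * (t * b) + (b - Z i) / (2 * b) * (-(t * b)) = t * Z i := by
      field_simp; ring
    rw [e1] at h
    refine h.trans (le_of_eq ?_)
    rw [Real.cosh_eq, Real.sinh_eq]
    field_simp; ring
  calc ∑ i, Real.exp (t * Z i)
      ≤ ∑ i, (Real.cosh (t * b) + Z i * (Real.sinh (t * b) / b)) :=
        Finset.sum_le_sum fun i _ => key i
    _ = Fintype.card ι * Real.cosh (t * b) := by
        rw [Finset.sum_add_distrib, ← Finset.sum_mul, hZ]; simp
    _ ≤ _ := by
        gcongr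
        refine (Real.cosh_le_exp_half_sq _).trans (le_of_eq ?_)
        congr 1; ring

/-- Maurey's exponential moment bound for functions on a permutation group that are Lipschitz with
respect to left multiplication by transpositions. -/
lemma sum_exp_perm_le (c t : ℝ) (hc : 0 < c) (α : Type) [Fintype α] :
    ∀ (_ : DecidableEq α) (f : Equiv.Perm α → ℝ),
      (∀ (σ : Equiv.Perm α) (a b : α), |f (Equiv.swap a b * σ) - f σ| ≤ c) →
      ∑ σ, Real.exp (t * (f σ - (∑ τ, f τ) / Fintype.card (Equiv.Perm α))) ≤
        Fintype.card (Equiv.Perm α) * Real.exp (2 * c ^ 2 * t ^ 2 * Fintype.card α) := by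
  refine Fintype.induction_empty_option
    (P := fun (α : Type) (_ : Fintype α) => ∀ (_ : DecidableEq α) (f : Equiv.Perm α → ℝ),
      (∀ (σ : Equiv.Perm α) (a b : α), |f (Equiv.swap a b * σ) - f σ| ≤ c) →
      ∑ σ, Real.exp (t * (f σ - (∑ τ, f τ) / Fintype.card (Equiv.Perm α))) ≤
        Fintype.card (Equiv.Perm α) * Real.exp (2 * c ^ 2 * t ^ 2 * Fintype.card α))
    ?_ ?_ ?_ α
  · intro α β _ e ih _ f hf
    let : Fintype α := Fintype.ofEquiv β e.symm
    have hE : ∀ F : Equiv.Perm β → ℝ, ∑ σ : Equiv.Perm α, F (e.permCongr σ) = ∑ τ, F τ :=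
      fun F => Equiv.sum_comp e.permCongr F
    have h := ih (Classical.decEq α) (fun σ => f (e.permCongr σ)) (by
      intro σ a b
      have h1 : e.permCongr (Equiv.swap a b * σ) =
          Equiv.swap (e a) (e b) * e.permCongr σ := by
        ext x
        simp [Equiv.permCongr_apply, Equiv.swap_apply_def, apply_ite e]
      rw [h1]
      exact hf _ _ _)
    rw [hE f, Fintype.card_congr e.permCongr, Fintype.card_congr e,
      hE (fun σ => Real.exp (t * (f σ - (∑ τ, f τ) / Fintype.card (Equiv.Perm β))))] at h
    exact h
  · intro _ f _
    simp
  · intro α _ ih inst f hf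
    let iα : DecidableEq α := Classical.decEq α
    obtain rfl : inst = Option.instDecidableEq := Subsingleton.elim _ _
    let D := (Equiv.Perm.decomposeOption (α := α)).symm
    let m : Option α → ℝ := fun p => (∑ e, f (D (p, e))) / Fintype.card (Equiv.Perm α)
    let μ : ℝ := (∑ p, m p) / Fintype.card (Option α)
    have hcP : (0 : ℝ) < Fintype.card (Equiv.Perm α) := by exact_mod_cast Fintype.card_pos
    have hcO : (0 : ℝ) < Fintype.card (Option α) := by exact_mod_cast Fintype.card_pos
    have hcard : (Fintype.card (Equiv.Perm (Option α)) : ℝ) =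
        Fintype.card (Option α) * Fintype.card (Equiv.Perm α) := by
      rw [← Fintype.card_congr D, Fintype.card_prod]; push_cast; rfl
    have hE : ∀ F : Equiv.Perm (Option α) → ℝ, ∑ σ, F σ = ∑ p, ∑ e, F (D (p, e)) := by
      intro F
      rw [← Equiv.sum_comp D F, Fintype.sum_prod_type]
    have hμ : (∑ τ, f τ) / Fintype.card (Equiv.Perm (Option α)) = μ := by
      simp only [μ, m]
      rw [hE, hcard, ← Finset.sum_div]
      field_simp
    have hD : ∀ p e, D (p, e) = Equiv.swap none p * Equiv.optionCongr e := fun p e =>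
      Equiv.Perm.decomposeOption_symm_apply (p, e)
    have hstep : ∀ p, ∑ e, Real.exp (t * (f (D (p, e)) - m p)) ≤
        Fintype.card (Equiv.Perm α) * Real.exp (2 * c ^ 2 * t ^ 2 * Fintype.card α) := by
      intro p
      refine ih iα (fun e => f (D (p, e))) ?_
      intro σ a b
      have h1 : D (p, Equiv.swap a b * σ) =
          Equiv.swap (Equiv.swap none p (some a)) (Equiv.swap none p (some b)) * D (p, σ) := by
        have h2 : Equiv.optionCongr (Equiv.swap a b * σ) =
            Equiv.swap (some a) (some b) * Equiv.optionCongr σ := by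
          rw [← Equiv.optionCongr_swap]
          ext1 x; cases x <;> rfl
        rw [hD, hD, h2, ← mul_assoc, ← mul_assoc, Equiv.mul_swap_eq_swap_mul]
      rw [h1]
      exact hf _ _ _
    have hm0 : ∀ p, |m p - m none| ≤ c := by
      intro p
      simp only [m]
      rw [← sub_div, ← Finset.sum_sub_distrib, abs_div, abs_of_pos hcP, div_le_iff₀ hcP]
      refine (Finset.abs_sum_le_sum_abs _ _).trans ?_
      refine (Finset.sum_le_card_nsmul _ _ c ?_).trans (le_of_eq ?_)
      · intro e _
        have h1 : D (none, e) = Equiv.optionCongr e := by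
          rw [hD, Equiv.swap_self]; rfl
        rw [h1, hD]
        exact hf _ _ _
      · simp [mul_comm]
    have hμ0 : |μ - m none| ≤ c := by
      have h1 : μ - m none = (∑ p, (m p - m none)) / Fintype.card (Option α) := by
        rw [Finset.sum_sub_distrib, sub_div]
        simp only [Finset.sum_const, Finset.card_univ, nsmul_eq_mul, μ]
        field_simp
      rw [h1, abs_div, abs_of_pos hcO, div_le_iff₀ hcO]
      refine (Finset.abs_sum_le_sum_abs _ _).trans ?_
      refine (Finset.sum_le_card_nsmul _ _ c fun p _ => hm0 p).trans (le_of_eq ?_)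
      rw [Finset.card_univ, nsmul_eq_mul, mul_comm]
    have hH := sum_exp_le_of_sum_eq_zero (fun p => m p - μ) (2 * c) t (by linarith)
      (by
        simp only [Finset.sum_sub_distrib, Finset.sum_const, Finset.card_univ, nsmul_eq_mul, μ]
        field_simp; simp)
      (by
        intro p
        have h1 := abs_le.mp (hm0 p)
        have h2 := abs_le.mp hμ0
        exact abs_le.mpr ⟨by linarith, by linarith⟩)
    rw [hμ, hE]
    calc ∑ p, ∑ e, Real.exp (t * (f (D (p, e)) - μ))
        = ∑ p, Real.exp (t * (m p - μ)) * ∑ e, Real.exp (t * (f (D (p, e)) - m p)) := by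
          refine Finset.sum_congr rfl fun p _ => ?_
          rw [Finset.mul_sum]
          refine Finset.sum_congr rfl fun e _ => ?_
          rw [← Real.exp_add]; congr 1; ring
      _ ≤ ∑ p, Real.exp (t * (m p - μ)) *
            (Fintype.card (Equiv.Perm α) * Real.exp (2 * c ^ 2 * t ^ 2 * Fintype.card α)) :=
          Finset.sum_le_sum fun p _ => mul_le_mul_of_nonneg_left (hstep p) (Real.exp_pos _).le
      _ ≤ (Fintype.card (Option α) * Real.exp (t ^ 2 * (2 * c) ^ 2 / 2)) *
            (Fintype.card (Equiv.Perm α) * Real.exp (2 * c ^ 2 * t ^ 2 * Fintype.card α)) := by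
          rw [← Finset.sum_mul]
          gcongr
      _ = _ := by
          rw [hcard, mul_mul_mul_comm, ← Real.exp_add]
          congr 2
          rw [Fintype.card_option]; push_cast; ring

/-! ### Relabelling the half-edges of a configuration -/

lemma totalDegConf_ext {n : ℕ} {d : Fin n → ℕ} (ω ω' : TotalDegConf n d)
    (h1 : ω.1.1 = ω'.1.1)
    (h2 : ∀ x (h : x ∈ ω.1.1) (h' : x ∈ ω'.1.1), (ω.2 ⟨x, h⟩).1 = (ω'.2 ⟨x, h'⟩).1) :
    ω = ω' := by
  obtain ⟨⟨A, hA⟩, N⟩ := ω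
  obtain ⟨⟨A', hA'⟩, N'⟩ := ω'
  dsimp only at h1
  subst h1
  have : N = N' := by
    ext1 ⟨x, hx⟩
    exact Subtype.ext (h2 x hx hx)
  rw [this]

/-- The action of a permutation `σ` of the half-edges on configurations: `(A, N)` is sent to
`(σ A, σ N σ⁻¹)`. -/
noncomputable def permute {n : ℕ} {d : Fin n → ℕ} (σ : Equiv.Perm (Σ k : Fin n, Fin (d k)))
    (ω : TotalDegConf n d) : TotalDegConf n d :=
  ⟨⟨ω.1.1.map σ.toEmbedding, by rw [Finset.card_map]; exact ω.1.2⟩,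
    ((σ.symm.subtypeEquiv (p := fun x => x ∈ ω.1.1.map σ.toEmbedding) (q := fun x => x ∈ ω.1.1)
      (fun _ => Finset.mem_map_equiv)).trans ω.2).trans
    (σ.symm.subtypeEquiv (p := fun x => x ∉ ω.1.1.map σ.toEmbedding) (q := fun x => x ∉ ω.1.1)
      (fun _ => not_congr Finset.mem_map_equiv)).symm⟩

lemma mem_permute {n : ℕ} {d : Fin n → ℕ} (σ : Equiv.Perm (Σ k : Fin n, Fin (d k)))
    (ω : TotalDegConf n d) (x : Σ k : Fin n, Fin (d k)) :
    x ∈ (permute σ ω).1.1 ↔ σ.symm x ∈ ω.1.1 := Finset.mem_map_equiv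

lemma permute_snd {n : ℕ} {d : Fin n → ℕ} (σ : Equiv.Perm (Σ k : Fin n, Fin (d k)))
    (ω : TotalDegConf n d) (x : Σ k : Fin n, Fin (d k)) (h : x ∈ (permute σ ω).1.1) :
    ((permute σ ω).2 ⟨x, h⟩).1 = σ (ω.2 ⟨σ.symm x, (mem_permute σ ω x).1 h⟩).1 := rfl

lemma permute_mul {n : ℕ} {d : Fin n → ℕ} (σ τ : Equiv.Perm (Σ k : Fin n, Fin (d k)))
    (ω : TotalDegConf n d) : permute (σ * τ) ω = permute σ (permute τ ω) := by
  apply totalDegConf_ext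
  · ext x
    simp only [mem_permute]
    rfl
  · intro x h h'
    rfl

lemma permute_one {n : ℕ} {d : Fin n → ℕ} (ω : TotalDegConf n d) : permute 1 ω = ω := by
  apply totalDegConf_ext
  · ext x
    simp only [mem_permute]
    rfl
  · intro x h h'
    rfl

lemma permute_bijective {n : ℕ} {d : Fin n → ℕ} (σ : Equiv.Perm (Σ k : Fin n, Fin (d k))) :
    Function.Bijective (permute (n := n) (d := d) σ) := by
  refine Function.bijective_iff_has_inverse.2 ⟨permute σ⁻¹, fun ω => ?_, fun ω => ?_⟩
  · rw [← permute_mul, inv_mul_cancel, permute_one]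
  · rw [← permute_mul, mul_inv_cancel, permute_one]

/-- The relabelling action is transitive: match up the tails arbitrarily, which forces the
matching of the heads. -/
lemma exists_permute_eq {n : ℕ} {d : Fin n → ℕ} (ω ω' : TotalDegConf n d) :
    ∃ σ, permute σ ω = ω' := by
  have hc : Fintype.card {x // x ∈ ω.1.1} = Fintype.card {x // x ∈ ω'.1.1} := by
    simp only [Fintype.card_coe]; rw [ω.1.2, ω'.1.2]
  let g : {x // x ∈ ω.1.1} ≃ {x // x ∈ ω'.1.1} := Fintype.equivOfCardEq hc
  let h : {x // x ∉ ω.1.1} ≃ {x // x ∉ ω'.1.1} := (ω.2.symm.trans g).trans ω'.2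
  let σ : Equiv.Perm (Σ k : Fin n, Fin (d k)) := Equiv.subtypeCongr g h
  have hσ1 : ∀ x (hx : x ∈ ω.1.1), σ x = (g ⟨x, hx⟩).1 := by
    intro x hx
    simp [σ, Equiv.subtypeCongr, Equiv.sumCompl_symm_apply_of_pos (p := fun x => x ∈ ω.1.1) hx]
  have hσ2 : ∀ x (hx : x ∉ ω.1.1), σ x = (h ⟨x, hx⟩).1 := by
    intro x hx
    simp [σ, Equiv.subtypeCongr, Equiv.sumCompl_symm_apply_of_neg (p := fun x => x ∈ ω.1.1) hx]
  have hmem : ∀ x, σ x ∈ ω'.1.1 ↔ x ∈ ω.1.1 := by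
    intro x
    by_cases hx : x ∈ ω.1.1
    · rw [hσ1 x hx]; simp [hx]
    · rw [hσ2 x hx]; simp only [hx, iff_false]; exact (h ⟨x, hx⟩).2
  refine ⟨σ, totalDegConf_ext _ _ ?_ ?_⟩
  · ext x
    rw [mem_permute, ← hmem, Equiv.apply_symm_apply]
  · intro x hx hx'
    have hy := (mem_permute σ ω x).1 hx
    rw [permute_snd, hσ2 _ (ω.2 ⟨σ.symm x, hy⟩).2]
    have h3 : g ⟨σ.symm x, hy⟩ = ⟨x, hx'⟩ := by
      apply Subtype.ext
      rw [← hσ1 _ hy, Equiv.apply_symm_apply]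
    simp [h, h3]

/-- The orbit map at `ω₀` sends the uniform measure on permutations to the uniform measure on
configurations. By transitivity the left-hand sum does not depend on `ω₀`, so it can be averaged
over all base points. -/
lemma card_mul_sum_permute {n : ℕ} {d : Fin n → ℕ} (ω₀ : TotalDegConf n d)
    (F : TotalDegConf n d → ℝ) :
    (Fintype.card (TotalDegConf n d) : ℝ) * ∑ σ, F (permute σ ω₀) =
      Fintype.card (Equiv.Perm (Σ k : Fin n, Fin (d k))) * ∑ ω, F ω := by
  have h1 : ∀ ω : TotalDegConf n d, ∑ σ, F (permute σ ω) = ∑ σ, F (permute σ ω₀) := by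
    intro ω
    obtain ⟨τ, rfl⟩ := exists_permute_eq ω₀ ω
    simp only [← permute_mul]
    exact Equiv.sum_comp (Equiv.mulRight τ) (fun σ => F (permute σ ω₀))
  calc (Fintype.card (TotalDegConf n d) : ℝ) * ∑ σ, F (permute σ ω₀)
      = ∑ ω : TotalDegConf n d, ∑ σ, F (permute σ ω) := by
        simp only [h1, Finset.sum_const, Finset.card_univ, nsmul_eq_mul]
    _ = ∑ σ : Equiv.Perm (Σ k : Fin n, Fin (d k)), ∑ ω, F (permute σ ω) := Finset.sum_comm
    _ = _ := by
        have h2 : ∀ σ : Equiv.Perm (Σ k : Fin n, Fin (d k)),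
            ∑ ω, F (permute σ ω) = ∑ ω, F ω := fun σ => (permute_bijective σ).sum_comp F
        simp only [h2, Finset.sum_const, Finset.card_univ, nsmul_eq_mul]

/-! ### The matching number under a transposition -/

lemma nu_bddAbove {n : ℕ} {d : Fin n → ℕ} (ω : TotalDegConf n d) :
    BddAbove {t | ∃ S : Finset {x : Σ k : Fin n, Fin (d k) // x ∈ ω.1.1},
      (∀ a ∈ S, ∀ b ∈ S, a.1.1 = b.1.1 → a = b) ∧
      (∀ a ∈ S, ∀ b ∈ S, (ω.2 a).1.1 = (ω.2 b).1.1 → a = b) ∧ S.card = t} := by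
  refine ⟨Fintype.card {x : Σ k : Fin n, Fin (d k) // x ∈ ω.1.1}, ?_⟩
  rintro t ⟨S, -, -, rfl⟩
  exact Finset.card_le_univ S

/-- The edges avoiding `a` and `b` are unaffected by the transposition `(a b)`, and a matching
contains at most one edge through each of `a` and `b`. -/
lemma nu_le_nu_permute_swap_add_two {n : ℕ} {d : Fin n → ℕ} (ω : TotalDegConf n d)
    (a b : Σ k : Fin n, Fin (d k)) :
    totalDegConfNu ω ≤ totalDegConfNu (permute (Equiv.swap a b) ω) + 2 := by
  obtain ⟨S, hS1, hS2, hS3⟩ := Nat.sSup_mem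
    (s := {t | ∃ S : Finset {x : Σ k : Fin n, Fin (d k) // x ∈ ω.1.1},
      (∀ a ∈ S, ∀ b ∈ S, a.1.1 = b.1.1 → a = b) ∧
      (∀ a ∈ S, ∀ b ∈ S, (ω.2 a).1.1 = (ω.2 b).1.1 → a = b) ∧ S.card = t})
    ⟨0, ∅, by simp, by simp, by simp⟩ (nu_bddAbove ω)
  change S.card = totalDegConfNu ω at hS3
  let B : (Σ k : Fin n, Fin (d k)) → Finset {x : Σ k : Fin n, Fin (d k) // x ∈ ω.1.1} :=
    fun c => Finset.univ.filter fun x => x.1 = c ∨ (ω.2 x).1 = c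
  have hB : ∀ c, (B c).card ≤ 1 := by
    intro c
    rw [Finset.card_le_one]
    intro x hx y hy
    simp only [B, Finset.mem_filter, Finset.mem_univ, true_and] at hx hy
    rcases hx with hx | hx <;> rcases hy with hy | hy
    · exact Subtype.ext (hx.trans hy.symm)
    · exact absurd (hx ▸ x.2) (hy ▸ (ω.2 y).2)
    · exact absurd (hy ▸ y.2) (hx ▸ (ω.2 x).2)
    · exact ω.2.injective (Subtype.ext (hx.trans hy.symm))
  let T := S \ (B a ∪ B b)
  have hT : S.card ≤ T.card + 2 := by
    have h1 : S.card ≤ T.card + (B a ∪ B b).card := by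
      have := Finset.le_card_sdiff (B a ∪ B b) S
      simp only [T]; omega
    have h2 := Finset.card_union_le (B a) (B b)
    have := hB a
    have := hB b
    omega
  have hTS : ∀ x ∈ T, x ∈ S := fun x hx => (Finset.mem_sdiff.1 hx).1
  have hTfix : ∀ x ∈ T, Equiv.swap a b x.1 = x.1 ∧ Equiv.swap a b (ω.2 x).1 = (ω.2 x).1 := by
    intro x hx
    have h := (Finset.mem_sdiff.1 hx).2
    simp only [B, Finset.mem_union, Finset.mem_filter, Finset.mem_univ, true_and, not_or] at h
    exact ⟨Equiv.swap_apply_of_ne_of_ne h.1.1 h.2.1, Equiv.swap_apply_of_ne_of_ne h.1.2 h.2.2⟩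
  let φ : {x : Σ k : Fin n, Fin (d k) // x ∈ ω.1.1} →
      {x : Σ k : Fin n, Fin (d k) // x ∈ (permute (Equiv.swap a b) ω).1.1} := fun x =>
    ⟨Equiv.swap a b x.1, by rw [mem_permute, Equiv.symm_apply_apply]; exact x.2⟩
  have hφ : Function.Injective φ := by
    intro x y h
    exact Subtype.ext ((Equiv.swap a b).injective (congrArg Subtype.val h))
  have hφ2 : ∀ x, ((permute (Equiv.swap a b) ω).2 (φ x)).1 = Equiv.swap a b (ω.2 x).1 := by
    intro x
    simp only [φ, permute_snd, Equiv.symm_apply_apply]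
  have hle : T.card ≤ totalDegConfNu (permute (Equiv.swap a b) ω) := by
    refine le_csSup (nu_bddAbove _) ⟨T.image φ, ?_, ?_, Finset.card_image_of_injective _ hφ⟩
    · intro x hx y hy hxy
      obtain ⟨x, hx', rfl⟩ := Finset.mem_image.1 hx
      obtain ⟨y, hy', rfl⟩ := Finset.mem_image.1 hy
      simp only [φ, (hTfix x hx').1, (hTfix y hy').1] at hxy
      rw [hS1 x (hTS x hx') y (hTS y hy') hxy]
    · intro x hx y hy hxy
      obtain ⟨x, hx', rfl⟩ := Finset.mem_image.1 hx
      obtain ⟨y, hy', rfl⟩ := Finset.mem_image.1 hy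
      rw [hφ2, hφ2, (hTfix x hx').2, (hTfix y hy').2] at hxy
      rw [hS2 x (hTS x hx') y (hTS y hy') hxy]
  omega

lemma abs_nu_sub_le {n : ℕ} {d : Fin n → ℕ} (ω : TotalDegConf n d)
    (a b : Σ k : Fin n, Fin (d k)) :
    |(totalDegConfNu (permute (Equiv.swap a b) ω) : ℝ) - totalDegConfNu ω| ≤ 2 := by
  have h1 := nu_le_nu_permute_swap_add_two ω a b
  have h2 := nu_le_nu_permute_swap_add_two (permute (Equiv.swap a b) ω) a b
  rw [← permute_mul, Equiv.swap_mul_self, permute_one] at h2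
  have h1' : (totalDegConfNu ω : ℝ) ≤ totalDegConfNu (permute (Equiv.swap a b) ω) + 2 := by
    exact_mod_cast h1
  have h2' : (totalDegConfNu (permute (Equiv.swap a b) ω) : ℝ) ≤ totalDegConfNu ω + 2 := by
    exact_mod_cast h2
  exact abs_le.mpr ⟨by linarith, by linarith⟩

/-! ### The concentration inequality -/

lemma sum_exp_ratio_le {n : ℕ} (hn : 1 ≤ n) {d : Fin n → ℕ} (ω₀ : TotalDegConf n d) (t : ℝ) :
    ∑ ω : TotalDegConf n d, Real.exp (t * (totalDegConfRatio ω - totalDegConfMean n d)) ≤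
      Fintype.card (TotalDegConf n d) *
        Real.exp (8 * t ^ 2 / (n : ℝ) ^ 2 * ((∑ k, d k : ℕ) : ℝ)) := by
  have hn0 : (0 : ℝ) < n := by exact_mod_cast hn
  have hΩ : (0 : ℝ) < Fintype.card (TotalDegConf n d) := by
    exact_mod_cast Fintype.card_pos_iff.2 ⟨ω₀⟩
  have hP : (0 : ℝ) < Fintype.card (Equiv.Perm (Σ k : Fin n, Fin (d k))) := by
    exact_mod_cast Fintype.card_pos
  have hmean : (∑ σ, totalDegConfRatio (permute σ ω₀)) /
      Fintype.card (Equiv.Perm (Σ k : Fin n, Fin (d k))) = totalDegConfMean n d := by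
    rw [totalDegConfMean, div_eq_div_iff hP.ne' hΩ.ne']
    have := card_mul_sum_permute ω₀ totalDegConfRatio
    linarith
  have h := sum_exp_perm_le (2 / n) t (by positivity) (Σ k : Fin n, Fin (d k)) _
    (fun σ => totalDegConfRatio (permute σ ω₀)) (by
      intro σ a b
      rw [permute_mul]
      simp only [totalDegConfRatio]
      rw [← sub_div, abs_div, abs_of_pos hn0]
      exact div_le_div_of_nonneg_right (abs_nu_sub_le _ a b) hn0.le)
  rw [hmean] at h
  have h2 := card_mul_sum_permute ω₀
    (fun ω => Real.exp (t * (totalDegConfRatio ω - totalDegConfMean n d)))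
  have hcard : Fintype.card (Σ k : Fin n, Fin (d k)) = ∑ k, d k := by simp
  have e : 2 * (2 / (n : ℝ)) ^ 2 * t ^ 2 * (Fintype.card (Σ k : Fin n, Fin (d k)) : ℝ) =
      8 * t ^ 2 / (n : ℝ) ^ 2 * ((∑ k, d k : ℕ) : ℝ) := by
    rw [hcard]; ring
  rw [e] at h
  refine le_of_mul_le_mul_left ?_ hP
  rw [← h2, mul_left_comm]
  exact mul_le_mul_of_nonneg_left h hΩ.le

/-- Concentration of the directed matching ratio for the random configuration model
conditioned on the total degrees `d₁, …, dₙ` (a uniformly random splitting of the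
half-edges into tails and heads together with a uniformly random bijection between
them): for every `ε > 0`, `P(|m(G) − E[m(G)]| > ε) ≤ 2·exp(−ε²n²/(32·Σ_k (d k)²))`. -/
theorem configuration_model_total_degrees_concentration
    (n : ℕ) (hn : 1 ≤ n) (d : Fin n → ℕ)
    (heven : Even (∑ k, d k)) (hpos : 0 < ∑ k, d k) (ε : ℝ) (hε : 0 < ε) :
    (((Finset.univ.filter
        (fun ω : TotalDegConf n d => ε < |totalDegConfRatio ω - totalDegConfMean n d|)).card : ℝ) /
      (Fintype.card (TotalDegConf n d)) ≤
    2 * Real.exp (-(ε ^ 2 * (n : ℝ) ^ 2) / (32 * ∑ k, ((d k : ℝ)) ^ 2))) := by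
  have hn0 : (0 : ℝ) < n := by exact_mod_cast hn
  rcases isEmpty_or_nonempty (TotalDegConf n d) with hemp | ⟨⟨ω₀⟩⟩
  · simp only [Fintype.card_eq_zero, Nat.cast_zero, div_zero]
    positivity
  have hΩ : (0 : ℝ) < Fintype.card (TotalDegConf n d) := by
    exact_mod_cast Fintype.card_pos_iff.2 ⟨ω₀⟩
  set N : ℝ := ((∑ k, d k : ℕ) : ℝ) with hN
  have hN0 : 0 < N := Nat.cast_pos.2 hpos
  have hNle : N ≤ ∑ k, ((d k : ℝ)) ^ 2 := by
    rw [hN]; push_cast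
    refine Finset.sum_le_sum fun k _ => ?_
    exact_mod_cast Nat.le_self_pow two_ne_zero (d k)
  -- The minimiser of `8 t² N / n² - t ε`.
  set t : ℝ := ε * (n : ℝ) ^ 2 / (16 * N) with ht
  have ht0 : 0 < t := by positivity
  have h1 := sum_exp_ratio_le hn ω₀ t
  have h2 := sum_exp_ratio_le hn ω₀ (-t)
  rw [neg_sq] at h2
  have hmarkov : ((Finset.univ.filter
        (fun ω : TotalDegConf n d => ε < |totalDegConfRatio ω - totalDegConfMean n d|)).card : ℝ) *
      Real.exp (t * ε) ≤
      ∑ ω : TotalDegConf n d, (Real.exp (t * (totalDegConfRatio ω - totalDegConfMean n d)) +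
        Real.exp (-t * (totalDegConfRatio ω - totalDegConfMean n d))) := by
    rw [← nsmul_eq_mul]
    refine (Finset.card_nsmul_le_sum _
      (fun ω : TotalDegConf n d => Real.exp (t * (totalDegConfRatio ω - totalDegConfMean n d)) +
        Real.exp (-t * (totalDegConfRatio ω - totalDegConfMean n d))) _ ?_).trans
      (Finset.sum_le_sum_of_subset_of_nonneg (Finset.filter_subset _ _)
        fun ω _ _ => by positivity)
    intro ω hω
    have hω := (Finset.mem_filter.1 hω).2
    have p1 := Real.exp_pos (t * (totalDegConfRatio ω - totalDegConfMean n d))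
    have p2 := Real.exp_pos (-t * (totalDegConfRatio ω - totalDegConfMean n d))
    rcases lt_abs.1 hω with h | h
    · have : Real.exp (t * ε) ≤ Real.exp (t * (totalDegConfRatio ω - totalDegConfMean n d)) :=
        Real.exp_le_exp.2 (by nlinarith)
      linarith
    · have : Real.exp (t * ε) ≤ Real.exp (-t * (totalDegConfRatio ω - totalDegConfMean n d)) :=
        Real.exp_le_exp.2 (by nlinarith)
      linarith
  rw [Finset.sum_add_distrib] at hmarkov
  have hexp : Real.exp (8 * t ^ 2 / (n : ℝ) ^ 2 * N) =
      Real.exp (-(ε ^ 2 * (n : ℝ) ^ 2) / (32 * N)) * Real.exp (t * ε) := by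
    rw [← Real.exp_add, ht]
    congr 1
    field_simp
    ring
  have hmono : Real.exp (-(ε ^ 2 * (n : ℝ) ^ 2) / (32 * N)) ≤
      Real.exp (-(ε ^ 2 * (n : ℝ) ^ 2) / (32 * ∑ k, ((d k : ℝ)) ^ 2)) := by
    apply Real.exp_le_exp.2
    rw [neg_div, neg_div, neg_le_neg_iff]
    gcongr
  rw [div_le_iff₀ hΩ]
  refine le_of_mul_le_mul_right ?_ (Real.exp_pos (t * ε))
  calc _ ≤ _ := hmarkov
    _ ≤ 2 * Real.exp (-(ε ^ 2 * (n : ℝ) ^ 2) / (32 * N)) * Fintype.card (TotalDegConf n d) *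
        Real.exp (t * ε) := by
      rw [hexp] at h1 h2; linarith
    _ ≤ _ := by gcongr
end

section
/- Fix an integer r ≥ 1 and α ∈ [0,1), and let Gₙ = G^{PA}_{r,α,n} be the preferential attachment graph on n vertices. Then for every n ≥ 1 and every c > 0, P(|m(Gₙ) − E[m(Gₙ)]| > c) ≤ 2·exp(−c²n/(8r²)). -/
/-!
The preferential attachment graph is realised as a deterministic function `paBuild` of independent
random choices, one per edge: with probability `α` a new edge picks a uniform vertex as its head,
and otherwise it picks a uniform half-edge of an earlier edge and takes the vertex at that half-edge
(`paMass_eq`, `pa_expect`).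

Suppose the choice of a single edge `e` is resampled. The only edges whose head changes are those
which copied their head, directly or through a chain of copies, from `e`; in the original graph all
of them share the head of `e` (`paBuild_resample`). A directed matching uses at most one edge with
this head, so deleting that edge leaves a matching of the new graph, and the matching number changes
by at most one (`paNu_le_add_one`).

McDiarmid's inequality for `n r` independent choices and differences bounded by one
(`pa_mcdiarmid`, proved by induction on the number of coordinates from Hoeffding's lemma) bounds the
probability by `2 exp (-c² n / (2 r))`, which is at most the claimed bound because `r ≥ 1`.
-/

open scoped Classical

/-- The total degree of the vertex `v` in the preferential attachment graph on the first
`k` vertices `0, …, k-1` (encoded by the heads function `W`): the in-degree (number of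
half-edges `(l,j)` with `1 ≤ l < k` and head `W l j = v`) plus the out-degree
(`r` if `1 ≤ v < k`, and `0` for the starting vertex `0`). -/
noncomputable def paDeg (n r : ℕ) (W : Fin n → Fin r → Fin n) (k : ℕ) (v : Fin n) : ℕ :=
  (Finset.univ.filter
      (fun p : Fin n × Fin r => 1 ≤ (p.1 : ℕ) ∧ (p.1 : ℕ) < k ∧ W p.1 p.2 = v)).card +
    (if 1 ≤ (v : ℕ) ∧ (v : ℕ) < k then r else 0)

/-- The probability that one given new edge added together with vertex `k` has head `v`:
with probability `α` the head is uniform on the `k` existing vertices and with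
probability `1-α` it is chosen proportionally to the total degree in the current graph
(uniform if the current graph has no edges, i.e. if `k = 1`). -/
noncomputable def paStep (n r : ℕ) (α : ℝ) (W : Fin n → Fin r → Fin n) (k : ℕ)
    (v : Fin n) : ℝ :=
  if (v : ℕ) < k then
    (if k = 1 then 1
      else α / k + (1 - α) * (paDeg n r W k v : ℝ) / (2 * r * ((k : ℝ) - 1)))
  else 0

/-- The probability mass of the outcome `W` (the function assigning to each vertex
`k ≥ 1` the heads of its `r` out-edges) under the preferential attachment law
`G^{PA}_{r,α,n}`; the fictitious heads attached to the starting vertex `0` are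
required to equal `0`. -/
noncomputable def paMass (n r : ℕ) (α : ℝ) (W : Fin n → Fin r → Fin n) : ℝ :=
  (if ∀ (k : Fin n) (j : Fin r), (k : ℕ) = 0 → (W k j : ℕ) = 0 then 1 else 0) *
    ∏ k : Fin n, (if (k : ℕ) = 0 then 1 else ∏ j : Fin r, paStep n r α W (k : ℕ) (W k j))

/-- The maximum size of a directed matching of the preferential attachment multigraph
encoded by `W`: a set of edges (pairs `(k,j)`, the `j`-th edge of vertex `k`, with tail
`k` and head `W k j`) no two of which share a tail vertex and no two of which share a
head vertex. -/
noncomputable def paNu (n r : ℕ) (W : Fin n → Fin r → Fin n) : ℕ :=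
  sSup {t | ∃ S : Finset (Fin n × Fin r),
    (∀ p ∈ S, 1 ≤ (p.1 : ℕ)) ∧
    (∀ p ∈ S, ∀ q ∈ S, p.1 = q.1 → p = q) ∧
    (∀ p ∈ S, ∀ q ∈ S, W p.1 p.2 = W q.1 q.2 → p = q) ∧ S.card = t}

/-- The directed matching ratio `m(Gₙ) = ν(Gₙ)/n` of the preferential attachment
multigraph encoded by `W`. -/
noncomputable def paRatio (n r : ℕ) (W : Fin n → Fin r → Fin n) : ℝ :=
  (paNu n r W : ℝ) / n

/-- The mean `E[m(Gₙ)]` of the directed matching ratio of `G^{PA}_{r,α,n}`. -/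
noncomputable def paMean (n r : ℕ) (α : ℝ) : ℝ :=
  ∑ W : Fin n → Fin r → Fin n, paMass n r α W * paRatio n r W

/-! ### Bounded differences on finite product spaces -/

/-- Hoeffding's lemma for a finitely supported law, with the constant coming from
`cosh t ≤ exp (t² / 2)`. -/
lemma pa_hoeffding {X : Type*} [Fintype X] (p : X → ℝ) (hp : ∀ x, 0 ≤ p x)
    (hp1 : ∑ x, p x = 1) (y : X → ℝ) (hy : ∀ x, |y x| ≤ 1) (hy0 : ∑ x, p x * y x = 0)
    (t : ℝ) : ∑ x, p x * Real.exp (t * y x) ≤ Real.exp (t ^ 2 / 2) := by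
  have key : ∀ x, Real.exp (t * y x) ≤ Real.cosh t + y x * Real.sinh t := by
    intro x
    obtain ⟨h1, h2⟩ := abs_le.mp (hy x)
    -- convexity of `exp` on the segment from `-t` to `t`
    have h := convexOn_exp.2 (Set.mem_univ (-t)) (Set.mem_univ t)
      (show (0 : ℝ) ≤ (1 - y x) / 2 by linarith) (show (0 : ℝ) ≤ (1 + y x) / 2 by linarith)
      (by ring)
    simp only [smul_eq_mul] at h
    rw [show (1 - y x) / 2 * -t + (1 + y x) / 2 * t = t * y x by ring] at h
    rw [Real.cosh_eq, Real.sinh_eq]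
    linarith
  calc ∑ x, p x * Real.exp (t * y x)
      ≤ ∑ x, p x * (Real.cosh t + y x * Real.sinh t) :=
        Finset.sum_le_sum fun x _ => mul_le_mul_of_nonneg_left (key x) (hp x)
    _ = Real.cosh t * ∑ x, p x + Real.sinh t * ∑ x, p x * y x := by
        rw [Finset.mul_sum, Finset.mul_sum, ← Finset.sum_add_distrib]
        exact Finset.sum_congr rfl fun x _ => by ring
    _ = Real.cosh t := by rw [hp1, hy0]; ring
    _ ≤ _ := Real.cosh_le_exp_half_sq t

lemma pa_sum_prod {ι X : Type*} [Fintype ι] [DecidableEq ι] [Fintype X] (p : ι → X → ℝ)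
    (hp1 : ∀ i, ∑ x, p i x = 1) : ∑ U : ι → X, ∏ i, p i (U i) = 1 := by
  rw [← Fintype.prod_sum]
  simp [hp1]

lemma pa_sum_cons {X : Type*} [Fintype X] (N : ℕ) (F : (Fin (N + 1) → X) → ℝ) :
    ∑ U, F U = ∑ x, ∑ V : Fin N → X, F (Fin.cons x V) := by
  rw [← (Fin.consEquiv fun _ : Fin (N + 1) => X).sum_comp, Fintype.sum_prod_type]
  rfl

/-- McDiarmid's exponential moment bound, for coordinates indexed by `Fin N`. -/
lemma pa_mgf_fin {X : Type*} [Fintype X] (t : ℝ) : ∀ (N : ℕ) (p : Fin N → X → ℝ)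
    (_ : ∀ i x, 0 ≤ p i x) (_ : ∀ i, ∑ x, p i x = 1) (f : (Fin N → X) → ℝ)
    (_ : ∀ U U' i, (∀ j, j ≠ i → U j = U' j) → f U ≤ f U' + 1),
    ∑ U, (∏ i, p i (U i)) * Real.exp (t * (f U - ∑ V, (∏ i, p i (V i)) * f V))
      ≤ Real.exp (N * (t ^ 2 / 2)) := by
  intro N
  induction N with
  | zero => intro p _ _ f _; simp
  | succ N ih =>
    intro p hp hp1 f hf
    -- the conditional expectation of `f` given the first coordinate
    set g : X → ℝ := fun x => ∑ V : Fin N → X, (∏ i, p i.succ (V i)) * f (Fin.cons x V) with hg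
    have hP : ∀ V : Fin N → X, 0 ≤ ∏ i : Fin N, p i.succ (V i) := fun V =>
      Finset.prod_nonneg fun i _ => hp _ _
    have hP1 : ∑ V : Fin N → X, ∏ i : Fin N, p i.succ (V i) = 1 :=
      pa_sum_prod (fun i : Fin N => p i.succ) fun i => hp1 _
    have hmean : ∑ V, (∏ i, p i (V i)) * f V = ∑ x, p 0 x * g x := by
      rw [pa_sum_cons]
      refine Finset.sum_congr rfl fun x _ => ?_
      rw [hg, Finset.mul_sum]
      refine Finset.sum_congr rfl fun V _ => ?_
      rw [Fin.prod_univ_succ]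
      simp [mul_assoc]
    have hgd : ∀ x x', g x ≤ g x' + 1 := by
      intro x x'
      calc g x ≤ ∑ V : Fin N → X, (∏ i, p i.succ (V i)) * (f (Fin.cons x' V) + 1) := by
            refine Finset.sum_le_sum fun V _ => mul_le_mul_of_nonneg_left ?_ (hP V)
            refine hf _ _ 0 fun j hj => ?_
            obtain ⟨i, rfl⟩ := Fin.exists_succ_eq.mpr hj
            simp
        _ = g x' + 1 := by
            simp only [mul_add, Finset.sum_add_distrib, mul_one, hP1, hg]
    set m := ∑ x, p 0 x * g x with hm
    have hconst : ∀ a : ℝ, ∑ x, p 0 x * a = a := fun a => by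
      rw [← Finset.sum_mul, hp1, one_mul]
    rw [hmean, pa_sum_cons]
    calc ∑ x, ∑ V : Fin N → X, (∏ i, p i ((Fin.cons x V : Fin (N + 1) → X) i))
            * Real.exp (t * (f (Fin.cons x V) - m))
        = ∑ x, p 0 x * Real.exp (t * (g x - m)) * ∑ V : Fin N → X, (∏ i, p i.succ (V i)) *
            Real.exp (t * (f (Fin.cons x V) - g x)) := by
          refine Finset.sum_congr rfl fun x _ => ?_
          rw [Finset.mul_sum]
          refine Finset.sum_congr rfl fun V _ => ?_
          rw [Fin.prod_univ_succ,
            show t * (f (Fin.cons x V) - m) = t * (g x - m) + t * (f (Fin.cons x V) - g x) by ring,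
            Real.exp_add]
          simp only [Fin.cons_zero, Fin.cons_succ]
          ring
      _ ≤ ∑ x, p 0 x * Real.exp (t * (g x - m)) * Real.exp (N * (t ^ 2 / 2)) := by
          refine Finset.sum_le_sum fun x _ => mul_le_mul_of_nonneg_left ?_
            (mul_nonneg (hp _ _) (Real.exp_pos _).le)
          refine ih (fun i => p i.succ) (fun i => hp _) (fun i => hp1 _)
            (fun V => f (Fin.cons x V)) fun U U' i h => hf _ _ i.succ fun j hj => ?_
          refine Fin.cases (fun _ => by simp) (fun k hk => ?_) j hj
          simpa using h k fun e => hk (by rw [e])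
      _ ≤ Real.exp (t ^ 2 / 2) * Real.exp (N * (t ^ 2 / 2)) := by
          rw [← Finset.sum_mul]
          refine mul_le_mul_of_nonneg_right ?_ (Real.exp_pos _).le
          refine pa_hoeffding (p 0) (hp 0) (hp1 0) (fun x => g x - m) (fun x => ?_) ?_ t
          · have h1 : m ≤ g x + 1 := by
              rw [← hconst (g x + 1)]
              exact Finset.sum_le_sum fun x' _ => mul_le_mul_of_nonneg_left (hgd _ _) (hp _ _)
            have h2 : g x - 1 ≤ m := by
              rw [← hconst (g x - 1)]
              exact Finset.sum_le_sum fun x' _ =>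
                mul_le_mul_of_nonneg_left (by linarith [hgd x x']) (hp _ _)
            rw [abs_le]; constructor <;> linarith
          · simp only [mul_sub, Finset.sum_sub_distrib, hconst]
            rw [← hm, sub_self]
      _ = _ := by
          rw [← Real.exp_add]; congr 1; push_cast; ring

lemma pa_mgf {ι X : Type*} [Fintype ι] [DecidableEq ι] [Fintype X] (p : ι → X → ℝ)
    (hp : ∀ i x, 0 ≤ p i x) (hp1 : ∀ i, ∑ x, p i x = 1) (f : (ι → X) → ℝ)
    (hf : ∀ U U' i, (∀ j, j ≠ i → U j = U' j) → f U ≤ f U' + 1) (t : ℝ) :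
    ∑ U, (∏ i, p i (U i)) * Real.exp (t * (f U - ∑ V, (∏ i, p i (V i)) * f V))
      ≤ Real.exp (Fintype.card ι * (t ^ 2 / 2)) := by
  let e := Fintype.equivFin ι
  have h := pa_mgf_fin t (Fintype.card ι) (fun i => p (e.symm i)) (fun i => hp _)
    (fun i => hp1 _) (fun U => f (U ∘ e)) fun U U' i h => hf _ _ (e.symm i) fun j hj =>
      h (e j) fun he => hj (by rw [← he]; simp)
  have hs : ∀ F : (ι → X) → ℝ, ∑ U, F U = ∑ U : Fin (Fintype.card ι) → X, F (U ∘ e) := fun F =>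
    ((e.arrowCongr (Equiv.refl X)).symm.sum_comp F).symm
  have hpr : ∀ U : Fin (Fintype.card ι) → X,
      ∏ i, p (e.symm i) (U i) = ∏ i, p i ((U ∘ e) i) := fun U => by
    rw [← e.prod_comp]; simp
  simp only [hpr] at h
  rw [hs, hs]
  exact h

/-- McDiarmid's inequality for a function on a finite product space that changes by at most
one when a single coordinate is resampled, with the Chernoff parameter `t` left free. -/
lemma pa_mcdiarmid {ι X : Type*} [Fintype ι] [DecidableEq ι] [Fintype X] (p : ι → X → ℝ)
    (hp : ∀ i x, 0 ≤ p i x) (hp1 : ∀ i, ∑ x, p i x = 1) (f : (ι → X) → ℝ)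
    (hf : ∀ U U' i, (∀ j, j ≠ i → U j = U' j) → f U ≤ f U' + 1) (t s : ℝ) (ht : 0 ≤ t) :
    ∑ U, (∏ i, p i (U i)) * (if s < |f U - ∑ V, (∏ i, p i (V i)) * f V| then 1 else 0)
      ≤ 2 * Real.exp (Fintype.card ι * (t ^ 2 / 2) - t * s) := by
  set m := ∑ V, (∏ i, p i (V i)) * f V with hm
  have h1 := pa_mgf p hp hp1 f hf t
  have h2 := pa_mgf p hp hp1 f hf (-t)
  rw [← hm] at h1 h2
  have key : ∀ y : ℝ, (if s < |y| then (1 : ℝ) else 0)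
      ≤ (Real.exp (t * y) + Real.exp (-t * y)) * Real.exp (-(t * s)) := by
    intro y
    split_ifs with h
    · rw [add_mul, ← Real.exp_add, ← Real.exp_add]
      rcases lt_abs.mp h with h | h
      · have : 1 ≤ Real.exp (t * y + -(t * s)) := Real.one_le_exp (by nlinarith)
        linarith [Real.exp_pos (-t * y + -(t * s))]
      · have : 1 ≤ Real.exp (-t * y + -(t * s)) := Real.one_le_exp (by nlinarith)
        linarith [Real.exp_pos (t * y + -(t * s))]
    · positivity
  calc _ ≤ ∑ U, (∏ i, p i (U i)) *
        ((Real.exp (t * (f U - m)) + Real.exp (-t * (f U - m))) * Real.exp (-(t * s))) :=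
        Finset.sum_le_sum fun U _ => mul_le_mul_of_nonneg_left (key _)
          (Finset.prod_nonneg fun i _ => hp _ _)
    _ = (∑ U, (∏ i, p i (U i)) * Real.exp (t * (f U - m)) +
          ∑ U, (∏ i, p i (U i)) * Real.exp (-t * (f U - m))) * Real.exp (-(t * s)) := by
        rw [← Finset.sum_add_distrib, Finset.sum_mul]
        exact Finset.sum_congr rfl fun U _ => by ring
    _ ≤ (Real.exp (Fintype.card ι * (t ^ 2 / 2)) + Real.exp (Fintype.card ι * (t ^ 2 / 2)))
          * Real.exp (-(t * s)) := by
        refine mul_le_mul_of_nonneg_right ?_ (Real.exp_pos _).le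
        rw [neg_sq] at h2
        exact add_le_add h1 h2
    _ = _ := by rw [sub_eq_add_neg, Real.exp_add]; ring

/-! ### Matchings when the edges into one vertex are redirected -/

/-- If `W'` arises from `W` by redirecting some edges with head `v`, the matching number
drops by at most one, since a matching contains at most one edge with head `v`. -/
lemma paNu_le_add_one {n r : ℕ} (W W' : Fin n → Fin r → Fin n) (v : Fin n)
    (h : ∀ k j, W k j = W' k j ∨ W k j = v) : paNu n r W ≤ paNu n r W' + 1 := by
  refine csSup_le' ?_
  rintro t ⟨S, hS1, hS2, hS3, rfl⟩
  set T := S.filter fun p => W p.1 p.2 ≠ v with hT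
  have hTS : ∀ p ∈ T, p ∈ S ∧ W p.1 p.2 = W' p.1 p.2 := fun p hp => by
    obtain ⟨h1, h2⟩ := Finset.mem_filter.mp hp
    exact ⟨h1, (h p.1 p.2).resolve_right h2⟩
  have hc : (S.filter fun p => W p.1 p.2 = v).card ≤ 1 := by
    refine Finset.card_le_one.mpr fun p hp q hq => ?_
    obtain ⟨h1, h2⟩ := Finset.mem_filter.mp hp
    obtain ⟨h3, h4⟩ := Finset.mem_filter.mp hq
    exact hS3 p h1 q h3 (h2.trans h4.symm)
  have hsum : (S.filter fun p => W p.1 p.2 = v).card + T.card = S.card :=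
    Finset.card_filter_add_card_filter_not _
  have hle : T.card ≤ paNu n r W' := by
    refine le_csSup ⟨Fintype.card (Fin n × Fin r), ?_⟩ ⟨T, fun p hp => hS1 p (hTS p hp).1,
      fun p hp q hq => hS2 p (hTS p hp).1 q (hTS q hq).1, fun p hp q hq e => ?_, rfl⟩
    · rintro t ⟨S, -, -, -, rfl⟩
      exact Finset.card_le_univ S
    · refine hS3 p (hTS p hp).1 q (hTS q hq).1 ?_
      rw [(hTS p hp).2, (hTS q hq).2, e]
  omega

/-! ### Preferential attachment driven by independent choices -/

/-- The random choice made by one new edge: either an existing vertex (the uniform case), or a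
half-edge `(l, i, b)` of an earlier edge (the preferential case), where `b = true` selects the
tail `l` of the `i`-th edge of `l` and `b = false` its head. -/
abbrev PaChoice (n r : ℕ) := Fin n ⊕ (Fin n × Fin r × Bool)

/-- `v` if it is a vertex older than `k`, and the vertex `0` otherwise. -/
def paClip {n : ℕ} [NeZero n] (k v : Fin n) : Fin n := if v < k then v else 0

/-- The head of an edge of vertex `k` that makes the choice `u`, given the heads `W` of the
edges of earlier vertices. Illegal choices are sent to the vertex `0`, so that the head is always
older than `k` when `k ≥ 1`. -/
def paHead {n r : ℕ} [NeZero n] (W : Fin n → Fin r → Fin n) (k : Fin n) :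
    PaChoice n r → Fin n
  | .inl v => paClip k v
  | .inr (l, i, b) => if l < k then paClip k (if b then l else W l i) else 0

/-- The graph built recursively from the choices `U` of all edges. -/
def paBuild {n r : ℕ} [NeZero n] (U : Fin n × Fin r → PaChoice n r) (k : Fin n) (j : Fin r) :
    Fin n :=
  match U (k, j) with
  | .inl v => paClip k v
  | .inr (l, i, b) => if h : l < k then paClip k (if b then l else paBuild U l i) else 0
termination_by k.val
decreasing_by exact h

/-- The law of the choice of an edge of vertex `k`. For `k ≤ 1` the head is forced to be `0`,
and any law would do. -/
noncomputable def paWeight (n r : ℕ) [NeZero n] (α : ℝ) (k : Fin n) : PaChoice n r → ℝ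
  | .inl v => if (k : ℕ) ≤ 1 then (if v = 0 then 1 else 0) else
      if (v : ℕ) < k then α / (k : ℕ) else 0
  | .inr (l, _, _) => if (k : ℕ) ≤ 1 then 0 else
      if 1 ≤ (l : ℕ) ∧ (l : ℕ) < k then (1 - α) / (2 * r * (((k : ℕ) : ℝ) - 1)) else 0

section
variable {n r : ℕ} [NeZero n]

lemma paClip_le (k v : Fin n) : paClip k v ≤ k := by
  unfold paClip
  split_ifs with h
  · exact h.le
  · exact Fin.zero_le _

lemma paClip_lt (k v : Fin n) (hk : 1 ≤ (k : ℕ)) : paClip k v < k := by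
  unfold paClip
  split_ifs with h
  · exact h
  · rw [Fin.lt_def, Fin.val_zero]; exact hk

lemma paHead_le (W : Fin n → Fin r → Fin n) (k : Fin n) (u : PaChoice n r) :
    paHead W k u ≤ k := by
  rcases u with v | ⟨l, i, b⟩
  · exact paClip_le _ _
  · simp only [paHead]
    split_ifs
    exacts [paClip_le _ _, paClip_le _ _, Fin.zero_le _]

lemma paHead_lt (W : Fin n → Fin r → Fin n) (k : Fin n) (u : PaChoice n r)
    (hk : 1 ≤ (k : ℕ)) : paHead W k u < k := by
  rcases u with v | ⟨l, i, b⟩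
  · exact paClip_lt _ _ hk
  · simp only [paHead]
    split_ifs
    · exact paClip_lt _ _ hk
    · exact paClip_lt _ _ hk
    · rw [Fin.lt_def, Fin.val_zero]; exact hk

lemma paBuild_eq (U : Fin n × Fin r → PaChoice n r) (k : Fin n) (j : Fin r) :
    paBuild U k j = paHead (paBuild U) k (U (k, j)) := by
  rw [paBuild]
  rcases U (k, j) with v | ⟨l, i, b⟩
  · rfl
  · simp [paHead]

/-- `paBuild U` is the unique solution of the recursion. -/
lemma paBuild_eq_iff (U : Fin n × Fin r → PaChoice n r) (W : Fin n → Fin r → Fin n) :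
    paBuild U = W ↔ ∀ q : Fin n × Fin r, paHead W q.1 (U q) = W q.1 q.2 := by
  constructor
  · rintro rfl q
    exact (paBuild_eq U q.1 q.2).symm
  · intro h
    suffices H : ∀ (m : ℕ) (k : Fin n), (k : ℕ) = m → ∀ j, paBuild U k j = W k j by
      funext k j; exact H _ k rfl j
    intro m
    induction m using Nat.strong_induction_on with
    | _ m ih =>
      intro k hk j
      rw [paBuild_eq, ← h (k, j)]
      rcases U (k, j) with v | ⟨l, i, b⟩
      · rfl
      · simp only [paHead]
        split_ifs with h1 h2
        · rfl
        · rw [ih l (hk ▸ h1) l rfl]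
        · rfl

/-- Resampling the choice of the edge `q` redirects only edges that shared the head `v` of
`q`: an edge whose head changes copied it, through a chain of earlier copies, from `q`. -/
lemma paBuild_resample (U U' : Fin n × Fin r → PaChoice n r) (q : Fin n × Fin r)
    (h : ∀ p, p ≠ q → U p = U' p) (k : Fin n) (j : Fin r) :
    paBuild U k j = paBuild U' k j ∨ paBuild U k j = paBuild U q.1 q.2 := by
  suffices H : ∀ (m : ℕ) (k : Fin n), (k : ℕ) = m → ∀ j,
      paBuild U k j = paBuild U' k j ∨ paBuild U k j = paBuild U q.1 q.2 from H _ k rfl j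
  intro m
  induction m using Nat.strong_induction_on with
  | _ m ih =>
    intro k hk j
    by_cases hq : (k, j) = q
    · right; rw [← hq]
    · have hU := h _ hq
      rw [paBuild_eq U k j, paBuild_eq U' k j, ← hU]
      rcases U (k, j) with v | ⟨l, i, b⟩
      · left; rfl
      · simp only [paHead]
        by_cases h1 : l < k
        · cases b
          · have hc : ∀ V : Fin n × Fin r → PaChoice n r,
                paClip k (paBuild V l i) = paBuild V l i := fun V => by
              unfold paClip
              rw [if_pos]
              rw [paBuild_eq]
              exact (paHead_le _ _ _).trans_lt h1
            simpa [h1, hc] using ih l (hk ▸ h1) l rfl i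
          · left; rfl
        · left; simp [h1]

lemma paNu_resample (U U' : Fin n × Fin r → PaChoice n r) (q : Fin n × Fin r)
    (h : ∀ p, p ≠ q → U p = U' p) :
    (paNu n r (paBuild U) : ℝ) ≤ paNu n r (paBuild U') + 1 := by
  exact_mod_cast paNu_le_add_one _ _ _ (paBuild_resample U U' q h)

/-! ### The law of the constructed graph -/

lemma paWeight_nonneg {α : ℝ} (hα : α ∈ Set.Ico (0 : ℝ) 1) (k : Fin n) (u : PaChoice n r) :
    0 ≤ paWeight n r α k u := by
  rcases u with v | ⟨l, i, b⟩
  · simp only [paWeight]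
    split_ifs
    · exact zero_le_one
    · exact le_rfl
    · exact div_nonneg hα.1 (Nat.cast_nonneg _)
    · exact le_rfl
  · simp only [paWeight]
    split_ifs with h1 h2
    · exact le_rfl
    · have : (1 : ℝ) ≤ ((k : ℕ) : ℝ) := by exact_mod_cast (by omega : 1 ≤ (k : ℕ))
      exact div_nonneg (by linarith [hα.2]) (mul_nonneg (by positivity) (by linarith))
    · exact le_rfl

lemma pa_card_lt (k : Fin n) :
    (Finset.univ.filter fun v : Fin n => (v : ℕ) < k).card = k := by
  have : (Finset.univ.filter fun v : Fin n => (v : ℕ) < k) = Finset.Iio k := by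
    ext v; simp
  rw [this, Fin.card_Iio]

lemma pa_card_Ico (k : Fin n) :
    (Finset.univ.filter fun v : Fin n => 1 ≤ (v : ℕ) ∧ (v : ℕ) < k).card = (k : ℕ) - 1 := by
  have : (Finset.univ.filter fun v : Fin n => 1 ≤ (v : ℕ) ∧ (v : ℕ) < k)
      = Finset.Ioo 0 k := by
    ext v
    simp only [Finset.mem_filter, Finset.mem_univ, true_and, Finset.mem_Ioo]
    rw [Fin.lt_def, Fin.lt_def, Fin.val_zero]
    rfl
  rw [this, Fin.card_Ioo]
  simp

lemma paWeight_sum (hr : 1 ≤ r) (α : ℝ) (k : Fin n) :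
    ∑ u, paWeight n r α k u = 1 := by
  rw [Fintype.sum_sum_type]
  simp only [Fintype.sum_prod_type, paWeight]
  by_cases hk : (k : ℕ) ≤ 1
  · simp [hk]
  · have hk' : ((k : ℕ) : ℝ) - 1 ≠ 0 := by
      have : (2 : ℝ) ≤ ((k : ℕ) : ℝ) := by exact_mod_cast (by omega : 2 ≤ (k : ℕ))
      intro h; linarith
    have hk0 : ((k : ℕ) : ℝ) ≠ 0 := by
      have : (k : ℕ) ≠ 0 := by omega
      exact_mod_cast this
    have hr0 : (r : ℝ) ≠ 0 := by
      have : r ≠ 0 := by omega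
      exact_mod_cast this
    have e1 : ∑ x : Fin n, (if (x : ℕ) < k then α / (k : ℕ) else 0) = α := by
      rw [← Finset.sum_filter, Finset.sum_const, pa_card_lt, nsmul_eq_mul]
      field_simp
    have e2 : ∀ a : ℝ, ∑ x : Fin n, ∑ _i : Fin r, ∑ _b : Bool,
        (if 1 ≤ (x : ℕ) ∧ (x : ℕ) < k then a else 0) = (((k : ℕ) : ℝ) - 1) * (r * (2 * a)) := by
      intro a
      have : ∀ x : Fin n, ∑ _i : Fin r, ∑ _b : Bool,
          (if 1 ≤ (x : ℕ) ∧ (x : ℕ) < k then a else 0) =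
          if 1 ≤ (x : ℕ) ∧ (x : ℕ) < k then r * (2 * a) else 0 := by
        intro x
        split_ifs <;> simp
      rw [Finset.sum_congr rfl fun x _ => this x, ← Finset.sum_filter, Finset.sum_const,
        pa_card_Ico, nsmul_eq_mul, Nat.cast_sub (by omega), Nat.cast_one]
    simp only [hk, if_false]
    rw [e1, e2]
    field_simp
    ring

/-- The probability that an edge of vertex `k ≥ 1` has head `v`, when all earlier heads are
legal. -/
lemma paWeight_step (hr : 1 ≤ r) (α : ℝ) (W : Fin n → Fin r → Fin n)
    (hW : ∀ k j, W k j ≤ k) (k v : Fin n) (hk : 1 ≤ (k : ℕ)) (hv : v < k) :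
    ∑ u, paWeight n r α k u * (if paHead W k u = v then 1 else 0)
      = paStep n r α W k v := by
  have hv' : (v : ℕ) < k := hv
  unfold paStep
  rw [if_pos hv']
  by_cases hk1 : (k : ℕ) = 1
  · rw [if_pos hk1]
    refine Eq.trans ?_ (paWeight_sum hr α k)
    refine Finset.sum_congr rfl fun u _ => ?_
    have h := paHead_lt W k u hk
    rw [Fin.lt_def] at h
    rw [if_pos (Fin.ext (by omega)), mul_one]
  · rw [if_neg hk1]
    have hk2 : ¬ (k : ℕ) ≤ 1 := by omega
    set B : ℝ := (1 - α) / (2 * r * (((k : ℕ) : ℝ) - 1)) with hB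
    rw [Fintype.sum_sum_type]
    have e1 : ∑ x : Fin n, paWeight n r α k (.inl x) *
        (if paHead W k (.inl x : PaChoice n r) = v then 1 else 0) = α / (k : ℕ) := by
      rw [Finset.sum_eq_single v]
      · simp [paWeight, paHead, paClip, hk2, hv]
      · intro x _ hx
        by_cases h : x < k
        · simp [paHead, paClip, h, hx]
        · have h' : ¬ (x : ℕ) < k := h
          simp [paWeight, hk2, h']
      · simp
    have e2 : ∀ q : Fin n × Fin r, ∀ b : Bool, paWeight n r α k (.inr (q.1, q.2, b)) *
        (if paHead W k (.inr (q.1, q.2, b) : PaChoice n r) = v then 1 else 0) =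
        B * (if 1 ≤ (q.1 : ℕ) ∧ (q.1 : ℕ) < k ∧ (if b then q.1 else W q.1 q.2) = v
          then 1 else 0) := by
      rintro ⟨l, i⟩ b
      by_cases h : 1 ≤ (l : ℕ) ∧ (l : ℕ) < k
      · have hl : l < k := h.2
        have hc : paClip k (if b then l else W l i) = if b then l else W l i := by
          unfold paClip
          rw [if_pos]
          cases b
          · exact (hW l i).trans_lt hl
          · exact hl
        simp only [paWeight, paHead, hk2, if_false, if_pos h, if_pos hl, hc, ← hB]
        simp [h]
      · have h' : ¬ (1 ≤ (l : ℕ) ∧ (l : ℕ) < k ∧ (if b then l else W l i) = v) :=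
          fun hh => h ⟨hh.1, hh.2.1⟩
        simp only [paWeight, hk2, if_false, if_neg h, if_neg h']
        simp
    have e3 : ∑ x : Fin n × Fin r × Bool, paWeight n r α k (.inr x) *
        (if paHead W k (.inr x : PaChoice n r) = v then 1 else 0)
        = B * paDeg n r W k v := by
      rw [← (Equiv.prodAssoc (Fin n) (Fin r) Bool).sum_comp, Fintype.sum_prod_type]
      simp only [Equiv.prodAssoc_apply, e2, Fintype.sum_bool, ← Finset.mul_sum,
        Finset.sum_add_distrib]
      congr 1
      unfold paDeg
      push_cast
      rw [add_comm]
      congr 1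
      · simp
      · rw [Fintype.sum_prod_type]
        rw [Finset.sum_eq_single v]
        · simp
        · intro x _ hx
          simp [hx]
        · simp
    rw [e1, e3, hB]
    ring

/-- The mass of `W` is the probability that the independent choices build `W`. -/
lemma paMass_eq (hr : 1 ≤ r) (α : ℝ) (W : Fin n → Fin r → Fin n) :
    paMass n r α W = ∑ U : Fin n × Fin r → PaChoice n r,
      (∏ q, paWeight n r α q.1 (U q)) * (if paBuild U = W then 1 else 0) := by
  have hprod : ∑ U : Fin n × Fin r → PaChoice n r,
      (∏ q, paWeight n r α q.1 (U q)) * (if paBuild U = W then 1 else 0)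
      = ∏ k : Fin n, ∏ j : Fin r, ∑ u, paWeight n r α k u *
          (if paHead W k u = W k j then 1 else 0) := by
    rw [← Fintype.prod_prod_type' (f := fun k j => ∑ u, paWeight n r α k u *
          (if paHead W k u = W k j then (1 : ℝ) else 0)), Fintype.prod_sum]
    refine Finset.sum_congr rfl fun U _ => ?_
    rw [Finset.prod_mul_distrib]
    congr 1
    by_cases h : paBuild U = W
    · rw [if_pos h, Finset.prod_eq_one]
      intro q _
      rw [if_pos ((paBuild_eq_iff U W).mp h q)]
    · rw [if_neg h]
      rw [paBuild_eq_iff] at h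
      push Not at h
      obtain ⟨q, hq⟩ := h
      exact (Finset.prod_eq_zero (Finset.mem_univ q) (if_neg hq)).symm
  rw [hprod]
  unfold paMass
  by_cases h0 : ∀ (k : Fin n) (j : Fin r), (k : ℕ) = 0 → (W k j : ℕ) = 0
  · rw [if_pos h0, one_mul]
    by_cases h1 : ∀ (k : Fin n) (j : Fin r), 1 ≤ (k : ℕ) → W k j < k
    · have hW : ∀ k j, W k j ≤ k := by
        intro k j
        by_cases hk : (k : ℕ) = 0
        · rw [Fin.le_def, h0 k j hk]; omega
        · exact (h1 k j (by omega)).le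
      refine Finset.prod_congr rfl fun k _ => ?_
      split_ifs with hk
      · refine (Finset.prod_eq_one fun j _ => ?_).symm
        refine Eq.trans ?_ (paWeight_sum hr α k)
        refine Finset.sum_congr rfl fun u _ => ?_
        have h := paHead_le W k u
        rw [Fin.le_def] at h
        rw [if_pos (Fin.ext (by rw [h0 k j hk]; omega)), mul_one]
      · exact Finset.prod_congr rfl fun j _ =>
          (paWeight_step hr α W hW k _ (by omega) (h1 k j (by omega))).symm
    · push Not at h1
      obtain ⟨k, j, hk, hj⟩ := h1
      rw [Finset.prod_eq_zero (Finset.mem_univ k), Finset.prod_eq_zero (Finset.mem_univ k)]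
      · refine Finset.prod_eq_zero (Finset.mem_univ j) (Finset.sum_eq_zero fun u _ => ?_)
        rw [if_neg, mul_zero]
        intro h
        exact absurd (h ▸ paHead_lt W k u hk) (not_lt.mpr hj)
      · rw [if_neg (by omega)]
        refine Finset.prod_eq_zero (Finset.mem_univ j) ?_
        unfold paStep
        rw [if_neg]
        exact not_lt.mpr hj
  · rw [if_neg h0, zero_mul]
    push Not at h0
    obtain ⟨k, j, hk, hj⟩ := h0
    refine (Finset.prod_eq_zero (Finset.mem_univ k) (Finset.prod_eq_zero (Finset.mem_univ j)
      (Finset.sum_eq_zero fun u _ => ?_))).symm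
    rw [if_neg, mul_zero]
    intro h
    have h' := paHead_le W k u
    rw [h, Fin.le_def] at h'
    omega

/-- Change of variables from the graph to the independent choices. -/
lemma pa_expect (hr : 1 ≤ r) (α : ℝ) (φ : (Fin n → Fin r → Fin n) → ℝ) :
    ∑ W, paMass n r α W * φ W = ∑ U : Fin n × Fin r → PaChoice n r,
      (∏ q, paWeight n r α q.1 (U q)) * φ (paBuild U) := by
  simp only [paMass_eq hr, Finset.sum_mul]
  rw [Finset.sum_comm]
  refine Finset.sum_congr rfl fun U _ => ?_
  rw [Finset.sum_eq_single (paBuild U)]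
  · simp
  · intro W _ hW
    simp [hW.symm]
  · simp

end

/-- Concentration of the directed matching ratio of the preferential attachment graph
`Gₙ = G^{PA}_{r,α,n}`: for every `n ≥ 1` and every `c > 0`,
`P(|m(Gₙ) − E[m(Gₙ)]| > c) ≤ 2·exp(−c²n/(8r²))`. -/
theorem preferential_attachment_concentration
    (r : ℕ) (hr : 1 ≤ r) (α : ℝ) (hα : α ∈ Set.Ico (0 : ℝ) 1) (n : ℕ) (hn : 1 ≤ n)
    (c : ℝ) (hc : 0 < c) :
    ∑ W ∈ Finset.univ.filter
        (fun W : Fin n → Fin r → Fin n => c < |paRatio n r W - paMean n r α|),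
      paMass n r α W ≤
    2 * Real.exp (-(c ^ 2 * (n : ℝ)) / (8 * (r : ℝ) ^ 2)) := by
  have : NeZero n := ⟨by omega⟩
  have hn0 : (0 : ℝ) < n := by exact_mod_cast hn
  have hr1 : (1 : ℝ) ≤ r := by exact_mod_cast hr
  have hr0 : (0 : ℝ) < r := by linarith
  have hm := pa_mcdiarmid (fun q : Fin n × Fin r => paWeight n r α q.1)
    (fun q => paWeight_nonneg hα q.1) (fun q => paWeight_sum hr α q.1)
    (fun U => (paNu n r (paBuild U) : ℝ)) (fun U U' q => paNu_resample U U' q)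
    -- the exponent `n r t² / 2 - t c n` is minimal at `t = c / r`
    (c / r) (c * n) (by positivity)
  have hmean : ∑ U : Fin n × Fin r → PaChoice n r,
      (∏ q, paWeight n r α q.1 (U q)) * (paNu n r (paBuild U) : ℝ) = n * paMean n r α := by
    rw [← pa_expect hr α fun W => (paNu n r W : ℝ), paMean, Finset.mul_sum]
    refine Finset.sum_congr rfl fun W _ => ?_
    unfold paRatio
    field_simp
  have hiff : ∀ W : Fin n → Fin r → Fin n, c * n < |(paNu n r W : ℝ) - n * paMean n r α| ↔
      c < |paRatio n r W - paMean n r α| := by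
    intro W
    have : (paNu n r W : ℝ) - n * paMean n r α = (paRatio n r W - paMean n r α) * n := by
      unfold paRatio
      field_simp
    rw [this, abs_mul, abs_of_pos hn0]
    exact mul_lt_mul_iff_left₀ hn0
  rw [hmean] at hm
  simp only [hiff] at hm
  rw [← pa_expect hr α fun W => if c < |paRatio n r W - paMean n r α| then 1 else 0] at hm
  rw [Finset.sum_filter]
  simp only [mul_ite, mul_one, mul_zero] at hm
  refine hm.trans (mul_le_mul_of_nonneg_left (Real.exp_le_exp.mpr ?_) zero_le_two)
  simp only [Fintype.card_prod, Fintype.card_fin, Nat.cast_mul]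
  have e : (n : ℝ) * r * ((c / r) ^ 2 / 2) - c / r * (c * n) = -(c ^ 2 * n) / (2 * r) := by
    field_simp
    ring
  rw [e, neg_div, neg_div, neg_le_neg_iff]
  refine div_le_div_of_nonneg_left (by positivity) (by positivity) ?_
  nlinarith
end

section
/- Fix an integer r ≥ 1, α ∈ [0,1), and integers n ≥ k ≥ 1. For a directed multigraph F on {1,…,k}, write Gₙ(k) for the subgraph of Gₙ = G^{PA}_{r,α,n} spanned by the vertices {1,…,k}. Let F and F' be two directed multigraphs on {1,…,k} such that P(Gₙ(k) = F) > 0 and P(Gₙ(k) = F') > 0 and such that F and F' have the same restriction to {1,…,k−1}. Then |E[ν(Gₙ) | Gₙ(k) = F] − E[ν(Gₙ) | Gₙ(k) = F']| ≤ 2r, where ν(Gₙ) denotes the maximum size of a directed matching of Gₙ. -/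
/-!
The idea is to couple the two conditional laws. A step of preferential attachment can be
realised by picking either a uniform vertex or a uniform *half-edge* of the current graph, the new
edge then pointing at the vertex carrying that half-edge (`PAChoice`, `choiceHead`). The law
`choiceWeight` of this pick depends only on the number of vertices, not on the graph, so both
processes can be run with the same picks (`sum_row_eq_sum_choice`).

Let `w`, `w'` be the heads of the edges of the last vertex of `F` and of `F'`. Under the coupling,
an edge either has the same head in both graphs, or, for some `j`, has head `w j` in the first and
`w' j` in the second graph; this is `PARelated`, and it is preserved by every step
(`PARelated.update`). Given a directed matching of the first graph, discarding its at most `r`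
edges with head in `{w 1, …, w r}` leaves edges having the same head in the second graph, hence a
directed matching there (`paNu_le_of_related`). So `ν` differs by at most `r` under the
coupling, which gives the bound even with `r` in place of `2r`.

The conditional expectation is written as `suffixExp`, the expectation over the rows `≥ m` given
the rows `< m`. Peeling off one row at a time (`suffixExp_step`) gives, by downward
induction on `m`, that it has total mass one (`suffixExp_one`) and that it inherits the bound on
`ν` (`suffixExp_nu_le`).
-/

open scoped Classical

/-- The event `Gₙ(k) = F` that the subgraph of `Gₙ = G^{PA}_{r,α,n}` spanned by the
first `k` vertices equals the multigraph encoded by the first `k` rows of `F`. -/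
noncomputable def paPrefixEvent (n r k : ℕ) (F : Fin n → Fin r → Fin n) :
    Finset (Fin n → Fin r → Fin n) :=
  Finset.univ.filter (fun W => ∀ l : Fin n, (l : ℕ) < k → W l = F l)

/-- The conditional expectation `E[ν(Gₙ) | Gₙ(k) = F]` of the maximum directed matching
size of the preferential attachment graph given its subgraph spanned by the first `k`
vertices. -/
noncomputable def paCondNu (n r k : ℕ) (α : ℝ) (F : Fin n → Fin r → Fin n) : ℝ :=
  (∑ W ∈ paPrefixEvent n r k F, paMass n r α W * (paNu n r W : ℝ)) /
    ∑ W ∈ paPrefixEvent n r k F, paMass n r α W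

/-- The two sources of randomness for the head of a new edge: a vertex, or a half-edge. The three
summands are a vertex, an edge seen from its head, and an edge seen from its tail. -/
abbrev PAChoice (n r : ℕ) : Type := Fin n ⊕ ((Fin n × Fin r) ⊕ (Fin n × Fin r))

/-- The vertex designated by a choice in the graph encoded by `W`. -/
def choiceHead {n r : ℕ} (W : Fin n → Fin r → Fin n) : PAChoice n r → Fin n
  | Sum.inl v => v
  | Sum.inr (Sum.inl p) => W p.1 p.2
  | Sum.inr (Sum.inr p) => p.1

/-- The probability of a choice when vertex `m` is added; it does not depend on the graph. For
`m = 1` there are no half-edges and the vertex `0` gets the whole mass. -/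
noncomputable def choiceWeight {n r : ℕ} (α : ℝ) (m : ℕ) : PAChoice n r → ℝ
  | Sum.inl v => if (v : ℕ) < m then (if m = 1 then 1 else α / m) else 0
  | Sum.inr (Sum.inl p) =>
      if 1 ≤ (p.1 : ℕ) ∧ (p.1 : ℕ) < m then (1 - α) / (2 * r * ((m : ℝ) - 1)) else 0
  | Sum.inr (Sum.inr p) =>
      if 1 ≤ (p.1 : ℕ) ∧ (p.1 : ℕ) < m then (1 - α) / (2 * r * ((m : ℝ) - 1)) else 0

/-- The heads of the edges of the vertices `1, …, m - 1` lie in `{0, …, m - 1}`. -/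
def PAValid {n r : ℕ} (m : ℕ) (W : Fin n → Fin r → Fin n) : Prop :=
  ∀ (l : Fin n) (i : Fin r), 1 ≤ (l : ℕ) → (l : ℕ) < m → (W l i : ℕ) < m

/-- The relation between the two coupled graphs on the first `m` vertices: every edge has either
the same head in both, or heads `w j` and `w' j` respectively, for some `j`. -/
def PARelated {n r : ℕ} (w w' : Fin r → Fin n) (m : ℕ) (W W' : Fin n → Fin r → Fin n) : Prop :=
  ∀ (l : Fin n) (i : Fin r), 1 ≤ (l : ℕ) → (l : ℕ) < m →
    W l i = W' l i ∨ ∃ j, W l i = w j ∧ W' l i = w' j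

/-- The conditional expectation of `f` given that the rows `< m` are those of `W`: the sum over
the graphs extending these rows, weighted by the transition probabilities of the rows `≥ m`. -/
noncomputable def suffixExp (n r : ℕ) (α : ℝ) (m : ℕ) (f : (Fin n → Fin r → Fin n) → ℝ)
    (W : Fin n → Fin r → Fin n) : ℝ :=
  ∑ V ∈ paPrefixEvent n r m W,
    (∏ l : Fin n, if m ≤ (l : ℕ) then ∏ j : Fin r, paStep n r α V l (V l j) else 1) * f V

/-! ### One step of the coupling -/

lemma mem_paPrefixEvent {n r m : ℕ} {W V : Fin n → Fin r → Fin n} :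
    V ∈ paPrefixEvent n r m W ↔ ∀ l : Fin n, (l : ℕ) < m → V l = W l := by
  simp [paPrefixEvent]

lemma paStep_congr {n r : ℕ} (α : ℝ) {m : ℕ} {W V : Fin n → Fin r → Fin n}
    (h : ∀ l : Fin n, (l : ℕ) < m → V l = W l) (v : Fin n) :
    paStep n r α V m v = paStep n r α W m v := by
  have : paDeg n r V m v = paDeg n r W m v := by
    unfold paDeg
    congr 2
    ext p
    simp only [Finset.mem_filter, Finset.mem_univ, true_and]
    constructor
    · rintro ⟨h1, h2, h3⟩
      exact ⟨h1, h2, by rw [← h _ h2]; exact h3⟩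
    · rintro ⟨h1, h2, h3⟩
      exact ⟨h1, h2, by rw [h _ h2]; exact h3⟩
  unfold paStep
  rw [this]

lemma choiceWeight_nonneg {n r : ℕ} {α : ℝ} (hα : α ∈ Set.Ico (0 : ℝ) 1) {m : ℕ} (hm : 1 ≤ m)
    (c : PAChoice n r) : 0 ≤ choiceWeight α m c := by
  have h1 : (0 : ℝ) ≤ 1 - α := by linarith [hα.2]
  have h2 : (0 : ℝ) ≤ (m : ℝ) - 1 := by
    have : (1 : ℝ) ≤ m := by exact_mod_cast hm
    linarith
  have h0 := hα.1
  rcases c with v | p | p <;> simp only [choiceWeight] <;> split_ifs <;> positivity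

/-- The transition probability is the law of the vertex designated by a random choice. -/
lemma paStep_eq_sum_choice {n r : ℕ} (α : ℝ) {m : ℕ} {W : Fin n → Fin r → Fin n}
    (hW : PAValid m W) (v : Fin n) :
    paStep n r α W m v = ∑ c, if choiceHead W c = v then choiceWeight α m c else 0 := by
  set q : ℝ := (1 - α) / (2 * r * ((m : ℝ) - 1)) with hq
  have e0 : (∑ c, if choiceHead W c = v then choiceWeight α m c else 0) =
      (∑ u : Fin n, if u = v then
        (if (u : ℕ) < m then (if m = 1 then 1 else α / m) else 0) else 0) +
      ((∑ p : Fin n × Fin r, if W p.1 p.2 = v then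
          (if 1 ≤ (p.1 : ℕ) ∧ (p.1 : ℕ) < m then q else 0) else 0) +
        ∑ p : Fin n × Fin r, if p.1 = v then
          (if 1 ≤ (p.1 : ℕ) ∧ (p.1 : ℕ) < m then q else 0) else 0) := by
    rw [Fintype.sum_sum_type, Fintype.sum_sum_type]
    rfl
  have e1 : (∑ p : Fin n × Fin r, if W p.1 p.2 = v then
      (if 1 ≤ (p.1 : ℕ) ∧ (p.1 : ℕ) < m then q else 0) else 0) =
      ((Finset.univ.filter (fun p : Fin n × Fin r =>
        1 ≤ (p.1 : ℕ) ∧ (p.1 : ℕ) < m ∧ W p.1 p.2 = v)).card : ℝ) * q := by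
    rw [← nsmul_eq_mul, ← Finset.sum_const, Finset.sum_filter]
    refine Finset.sum_congr rfl fun p _ => ?_
    by_cases h1 : W p.1 p.2 = v <;> simp [h1]
  have e2 : (∑ p : Fin n × Fin r, if p.1 = v then
      (if 1 ≤ (p.1 : ℕ) ∧ (p.1 : ℕ) < m then q else 0) else 0) =
      if 1 ≤ (v : ℕ) ∧ (v : ℕ) < m then (r : ℝ) * q else 0 := by
    rw [Fintype.sum_prod_type]
    split_ifs with h <;> simp [h]
  rw [e0, e1, e2, Finset.sum_ite_eq' Finset.univ v, if_pos (Finset.mem_univ v)]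
  unfold paStep paDeg
  by_cases hv : (v : ℕ) < m
  · simp only [hv, if_true, and_true]
    by_cases hm : m = 1
    · subst hm
      have : q = 0 := by simp [hq]
      simp [this]
    · simp only [hm, if_false]
      push_cast
      rw [hq]
      split_ifs <;> ring
  · have : (Finset.univ.filter (fun p : Fin n × Fin r =>
        1 ≤ (p.1 : ℕ) ∧ (p.1 : ℕ) < m ∧ W p.1 p.2 = v)) = ∅ := by
      refine Finset.filter_eq_empty_iff.2 ?_
      rintro p - ⟨h1, h2, h3⟩
      exact hv (h3 ▸ hW p.1 p.2 h1 h2)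
    simp [hv, this]

lemma sum_choiceWeight {n r : ℕ} (hr : 1 ≤ r) (α : ℝ) {m : ℕ} (hm : 1 ≤ m) (hmn : m ≤ n) :
    ∑ c : PAChoice n r, choiceWeight α m c = 1 := by
  rw [Fintype.sum_sum_type, Fintype.sum_sum_type]
  simp only [choiceWeight]
  set q : ℝ := (1 - α) / (2 * r * ((m : ℝ) - 1)) with hq
  have e1 : ∀ a : ℝ, (∑ v : Fin n, if (v : ℕ) < m then a else 0) = m * a := by
    intro a
    rw [Fin.sum_univ_eq_sum_range (fun i => if i < m then a else 0) n, ← Finset.sum_filter]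
    have : (Finset.range n).filter (· < m) = Finset.range m := by
      ext i; simp; omega
    rw [this]; simp
  have e2 : (∑ v : Fin n, if 1 ≤ (v : ℕ) ∧ (v : ℕ) < m then (r : ℝ) * q else 0) =
      ((m : ℝ) - 1) * (r * q) := by
    rw [Fin.sum_univ_eq_sum_range (fun i => if 1 ≤ i ∧ i < m then (r : ℝ) * q else 0) n,
      ← Finset.sum_filter]
    have : (Finset.range n).filter (fun i => 1 ≤ i ∧ i < m) = Finset.Ico 1 m := by
      ext i; simp; omega
    rw [this]; simp [Nat.cast_sub hm]
  have e3 : (∑ p : Fin n × Fin r, if 1 ≤ (p.1 : ℕ) ∧ (p.1 : ℕ) < m then q else 0) =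
      ((m : ℝ) - 1) * (r * q) := by
    rw [← e2, Fintype.sum_prod_type]
    refine Finset.sum_congr rfl fun v _ => ?_
    split_ifs <;> simp
  rw [e3, e1]
  by_cases h : m = 1
  · simp [h]
  · have h1 : (m : ℝ) - 1 ≠ 0 := by
      rw [sub_ne_zero]; exact_mod_cast h
    have h2 : (r : ℝ) ≠ 0 := by positivity
    have h3 : (m : ℝ) ≠ 0 := by positivity
    rw [if_neg h, hq]
    field_simp
    ring

/-- Averaging over a new row amounts to averaging over `r` independent choices. -/
lemma sum_row_eq_sum_choice {n r : ℕ} (α : ℝ) {m : ℕ} {W : Fin n → Fin r → Fin n}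
    (hW : PAValid m W) (h : (Fin r → Fin n) → ℝ) :
    ∑ x : Fin r → Fin n, (∏ j, paStep n r α W m (x j)) * h x =
      ∑ c : Fin r → PAChoice n r,
        (∏ j, choiceWeight α m (c j)) * h (fun j => choiceHead W (c j)) := by
  have key : ∀ x : Fin r → Fin n, ∏ j, paStep n r α W m (x j) =
      ∑ c : Fin r → PAChoice n r, if (fun j => choiceHead W (c j)) = x then
        ∏ j, choiceWeight α m (c j) else 0 := by
    intro x
    simp_rw [paStep_eq_sum_choice α hW]
    rw [Finset.prod_univ_sum, Fintype.piFinset_univ]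
    refine Finset.sum_congr rfl fun c _ => ?_
    rw [Finset.prod_ite_zero]
    simp [funext_iff]
  simp_rw [key, Finset.sum_mul]
  rw [Finset.sum_comm]
  refine Finset.sum_congr rfl fun c _ => ?_
  simp

lemma sum_prod_choiceWeight {n r : ℕ} (hr : 1 ≤ r) (α : ℝ) {m : ℕ} (hm : 1 ≤ m) (hmn : m ≤ n) :
    ∑ c : Fin r → PAChoice n r, ∏ j, choiceWeight α m (c j) = 1 := by
  have := Finset.prod_univ_sum (fun _ : Fin r => (Finset.univ : Finset (PAChoice n r)))
    (fun _ c => choiceWeight α m c)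
  rw [Fintype.piFinset_univ] at this
  rw [← this, sum_choiceWeight hr α hm hmn]
  simp

/-- Choices of nonzero weight designate existing vertices, so adding a row keeps the graph valid. -/
lemma PAValid.update {n r : ℕ} {α : ℝ} {W : Fin n → Fin r → Fin n} {a : Fin n}
    (hW : PAValid a W) {c : Fin r → PAChoice n r} (hc : ∏ j, choiceWeight α a (c j) ≠ 0) :
    PAValid ((a : ℕ) + 1) (Function.update W a (fun j => choiceHead W (c j))) := by
  intro l i hl hla
  by_cases h : l = a
  · subst h
    rw [Function.update_self]
    have hi := Finset.prod_ne_zero_iff.1 hc i (Finset.mem_univ i)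
    rcases hci : c i with v | p | p <;> rw [hci] at hi <;>
      simp only [choiceWeight, ne_eq, ite_eq_right_iff, Classical.not_imp] at hi <;>
      simp only [choiceHead]
    · omega
    · have := hW p.1 p.2 hi.1.1 hi.1.2
      omega
    · omega
  · rw [Function.update_of_ne h]
    have : (l : ℕ) < a := by
      have : (l : ℕ) ≠ a := fun h' => h (Fin.ext h')
      omega
    have := hW l i hl this
    omega

/-- Adding a vertex with the same choices of nonzero weight on both sides preserves the coupling relation. -/
lemma PARelated.update {n r : ℕ} {α : ℝ} {w w' : Fin r → Fin n} {W W' : Fin n → Fin r → Fin n}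
    {a : Fin n} (hR : PARelated w w' a W W') {c : Fin r → PAChoice n r}
    (hc : ∏ j, choiceWeight α a (c j) ≠ 0) :
    PARelated w w' ((a : ℕ) + 1) (Function.update W a (fun j => choiceHead W (c j)))
      (Function.update W' a (fun j => choiceHead W' (c j))) := by
  intro l i hl hla
  by_cases h : l = a
  · subst h
    rw [Function.update_self, Function.update_self]
    have hi := Finset.prod_ne_zero_iff.1 hc i (Finset.mem_univ i)
    rcases hci : c i with v | p | p <;> rw [hci] at hi <;>
      simp only [choiceWeight, ne_eq, ite_eq_right_iff, Classical.not_imp] at hi <;>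
      simp only [choiceHead]
    · simp
    · exact hR p.1 p.2 hi.1.1 hi.1.2
    · simp
  · rw [Function.update_of_ne h, Function.update_of_ne h]
    have : (l : ℕ) < a := by
      have : (l : ℕ) ≠ a := fun h' => h (Fin.ext h')
      omega
    exact hR l i hl this

/-! ### Matchings of coupled graphs -/

lemma paNu_le_of_related {n r : ℕ} {w w' : Fin r → Fin n} {W W' : Fin n → Fin r → Fin n}
    (hR : PARelated w w' n W W') : paNu n r W ≤ paNu n r W' + r := by
  refine csSup_le ⟨0, ∅, by simp⟩ ?_
  rintro t ⟨S, h1, h2, h3, rfl⟩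
  set T := S.filter (fun p => ∃ j, W p.1 p.2 = w j) with hT
  set T' := S.filter (fun p => ¬ ∃ j, W p.1 p.2 = w j) with hT'
  have hcard : T.card + T'.card = S.card := Finset.card_filter_add_card_filter_not _
  -- matching edges with head in the range of `w` are determined by their head
  have hTr : T.card ≤ r := by
    have : T.card ≤ (Finset.univ.image w).card := by
      refine Finset.card_le_card_of_injOn (fun p => W p.1 p.2) ?_ ?_
      · intro p hp
        obtain ⟨-, j, hj⟩ := Finset.mem_filter.1 hp
        simp [hj]
      · intro p hp q hq hpq
        exact h3 p (Finset.mem_filter.1 hp).1 q (Finset.mem_filter.1 hq).1 hpq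
    exact this.trans (Finset.card_image_le.trans (by simp))
  have hsame : ∀ p ∈ T', W p.1 p.2 = W' p.1 p.2 := by
    intro p hp
    obtain ⟨hpS, hpw⟩ := Finset.mem_filter.1 hp
    rcases hR p.1 p.2 (h1 p hpS) p.1.2 with h | ⟨j, hj, -⟩
    · exact h
    · exact (hpw ⟨j, hj⟩).elim
  have hsub : T' ⊆ S := Finset.filter_subset _ _
  have hν : T'.card ≤ paNu n r W' := by
    refine le_csSup ⟨Fintype.card (Fin n × Fin r), ?_⟩ ⟨T', ?_, ?_, ?_, rfl⟩
    · rintro t ⟨S, -, -, -, rfl⟩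
      exact Finset.card_le_univ S
    · exact fun p hp => h1 p (hsub hp)
    · exact fun p hp q hq => h2 p (hsub hp) q (hsub hq)
    · intro p hp q hq hpq
      rw [← hsame p hp, ← hsame q hq] at hpq
      exact h3 p (hsub hp) q (hsub hq) hpq
  omega

/-! ### Downward induction on the number of exposed vertices -/

lemma suffixExp_top {n r : ℕ} (α : ℝ) (f : (Fin n → Fin r → Fin n) → ℝ)
    (W : Fin n → Fin r → Fin n) : suffixExp n r α n f W = f W := by
  have : paPrefixEvent n r n W = {W} := by
    ext V
    simp [mem_paPrefixEvent, funext_iff]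
  rw [suffixExp, this, Finset.sum_singleton]
  have : ∀ l : Fin n, ¬ n ≤ (l : ℕ) := fun l => by omega
  simp [this]

/-- The tower property: expose the row of the vertex `a`. -/
lemma suffixExp_row {n r : ℕ} (α : ℝ) (f : (Fin n → Fin r → Fin n) → ℝ)
    (W : Fin n → Fin r → Fin n) (a : Fin n) :
    suffixExp n r α a f W = ∑ x : Fin r → Fin n, (∏ j, paStep n r α W a (x j)) *
      suffixExp n r α ((a : ℕ) + 1) f (Function.update W a x) := by
  unfold suffixExp
  rw [← Finset.sum_fiberwise (paPrefixEvent n r a W) (fun V => V a)]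
  refine Finset.sum_congr rfl fun x _ => ?_
  have hev : (paPrefixEvent n r a W).filter (fun V => V a = x) =
      paPrefixEvent n r ((a : ℕ) + 1) (Function.update W a x) := by
    ext V
    simp only [Finset.mem_filter, mem_paPrefixEvent]
    constructor
    · rintro ⟨h1, h2⟩ l hl
      by_cases h : l = a
      · subst h; simpa using h2
      · rw [Function.update_of_ne h]
        have : (l : ℕ) ≠ a := fun h' => h (Fin.ext h')
        exact h1 l (by omega)
    · intro h
      refine ⟨fun l hl => ?_, by simpa using h a (by omega)⟩
      rw [h l (by omega), Function.update_of_ne (by rintro rfl; omega)]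
  rw [hev, Finset.mul_sum]
  refine Finset.sum_congr rfl fun V hV => ?_
  rw [← hev, Finset.mem_filter, mem_paPrefixEvent] at hV
  obtain ⟨hV, rfl⟩ := hV
  rw [← mul_assoc]
  congr 1
  rw [← Finset.mul_prod_erase _ _ (Finset.mem_univ a), if_pos le_rfl]
  conv_rhs => rw [← Finset.mul_prod_erase _ _ (Finset.mem_univ a), if_neg (by omega), one_mul]
  congr 1
  · exact Finset.prod_congr rfl fun j _ => paStep_congr α hV _
  · refine Finset.prod_congr rfl fun l hl => ?_
    have : (l : ℕ) ≠ a := fun h' => (Finset.mem_erase.1 hl).1 (Fin.ext h')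
    by_cases h : (a : ℕ) ≤ l
    · rw [if_pos h, if_pos (by omega)]
    · rw [if_neg h, if_neg (by omega)]

lemma suffixExp_step {n r : ℕ} (α : ℝ) (f : (Fin n → Fin r → Fin n) → ℝ)
    {W : Fin n → Fin r → Fin n} {a : Fin n} (hW : PAValid a W) :
    suffixExp n r α a f W = ∑ c : Fin r → PAChoice n r, (∏ j, choiceWeight α a (c j)) *
      suffixExp n r α ((a : ℕ) + 1) f (Function.update W a (fun j => choiceHead W (c j))) := by
  rw [suffixExp_row]
  exact sum_row_eq_sum_choice α hW
    (fun x => suffixExp n r α ((a : ℕ) + 1) f (Function.update W a x))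

lemma suffixExp_one {n r : ℕ} (hr : 1 ≤ r) (α : ℝ) {m : ℕ} (hmn : m ≤ n) :
    1 ≤ m → ∀ W : Fin n → Fin r → Fin n, PAValid m W → suffixExp n r α m (fun _ => 1) W = 1 := by
  induction hmn using Nat.decreasingInduction with
  | self => intro _ W _; exact suffixExp_top α _ W
  | of_succ m hm ih =>
    intro hm1 W hW
    have := suffixExp_step α (fun _ => 1) (a := ⟨m, hm⟩) hW
    refine (this.trans ?_).trans (sum_prod_choiceWeight hr α hm1 hm.le)
    refine Finset.sum_congr rfl fun c _ => ?_
    by_cases hc : ∏ j, choiceWeight α m (c j) = 0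
    · simp [hc]
    · have h1 := ih (by omega) _ (PAValid.update (a := ⟨m, hm⟩) hW hc)
      simp only [h1, mul_one]

lemma suffixExp_nu_le {n r : ℕ} (hr : 1 ≤ r) {α : ℝ} (hα : α ∈ Set.Ico (0 : ℝ) 1)
    {w w' : Fin r → Fin n} {m : ℕ} (hmn : m ≤ n) :
    1 ≤ m → ∀ W W' : Fin n → Fin r → Fin n, PAValid m W → PAValid m W' →
      PARelated w w' m W W' →
      suffixExp n r α m (fun V => (paNu n r V : ℝ)) W ≤
        suffixExp n r α m (fun V => (paNu n r V : ℝ)) W' + r := by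
  induction hmn using Nat.decreasingInduction with
  | self =>
    intro _ W W' _ _ hR
    rw [suffixExp_top, suffixExp_top]
    exact_mod_cast paNu_le_of_related hR
  | of_succ m hm ih =>
    intro hm1 W W' hW hW' hR
    have e := suffixExp_step α (fun V => (paNu n r V : ℝ)) (a := ⟨m, hm⟩) hW
    have e' := suffixExp_step α (fun V => (paNu n r V : ℝ)) (a := ⟨m, hm⟩) hW'
    simp only at e e'
    have hsum : (r : ℝ) = ∑ c : Fin r → PAChoice n r, (∏ j, choiceWeight α m (c j)) * r := by
      rw [← Finset.sum_mul, sum_prod_choiceWeight hr α hm1 hm.le, one_mul]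
    rw [e, e']
    conv_rhs => rw [hsum]
    rw [← Finset.sum_add_distrib]
    refine Finset.sum_le_sum fun c _ => ?_
    rw [← mul_add]
    by_cases hc : ∏ j, choiceWeight α m (c j) = 0
    · simp [hc]
    · exact mul_le_mul_of_nonneg_left
        (ih (by omega) _ _ (PAValid.update (a := ⟨m, hm⟩) hW hc)
          (PAValid.update (a := ⟨m, hm⟩) hW' hc) (PARelated.update (a := ⟨m, hm⟩) hR hc))
        (Finset.prod_nonneg fun j _ => choiceWeight_nonneg hα hm1 _)

/-! ### The conditional expectation -/

/-- The mass of `V` factors into the probability of its first `k` rows, which is constant on the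
prefix event, and the transition probabilities of the other rows. -/
lemma sum_prefixEvent_paMass {n r k : ℕ} (hk : 1 ≤ k) (α : ℝ) (F : Fin n → Fin r → Fin n)
    (f : (Fin n → Fin r → Fin n) → ℝ) :
    ∑ V ∈ paPrefixEvent n r k F, paMass n r α V * f V =
      ((if ∀ (l : Fin n) (j : Fin r), (l : ℕ) = 0 → (F l j : ℕ) = 0 then 1 else 0) *
        ∏ l : Fin n, if 1 ≤ (l : ℕ) ∧ (l : ℕ) < k then
          ∏ j : Fin r, paStep n r α F l (F l j) else 1) * suffixExp n r α k f F := by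
  rw [suffixExp, Finset.mul_sum]
  refine Finset.sum_congr rfl fun V hV => ?_
  rw [mem_paPrefixEvent] at hV
  rw [← mul_assoc]
  congr 1
  unfold paMass
  rw [mul_assoc, ← Finset.prod_mul_distrib]
  congr 1
  · have : (∀ (l : Fin n) (j : Fin r), (l : ℕ) = 0 → (V l j : ℕ) = 0) ↔
        ∀ (l : Fin n) (j : Fin r), (l : ℕ) = 0 → (F l j : ℕ) = 0 := by
      refine forall_congr' fun l => forall_congr' fun j => imp_congr_right fun hl => ?_
      rw [hV l (by omega)]
    simp only [this]
  · refine Finset.prod_congr rfl fun l _ => ?_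
    by_cases h0 : (l : ℕ) = 0
    · rw [if_pos h0, if_neg (by omega), if_neg (by omega), one_mul]
    · rw [if_neg h0]
      by_cases hlk : (l : ℕ) < k
      · rw [if_pos (by omega), if_neg (by omega), mul_one, hV l hlk]
        exact Finset.prod_congr rfl fun j _ => paStep_congr α (fun i hi => hV i (by omega)) _
      · rw [if_neg (by omega), if_pos (by omega), one_mul]

/-- A prefix of positive probability is valid, and conditioning on it gives `suffixExp`. -/
lemma paCondNu_eq {n r k : ℕ} (hr : 1 ≤ r) (hk : 1 ≤ k) (hkn : k ≤ n) (α : ℝ)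
    (F : Fin n → Fin r → Fin n) (hF : 0 < ∑ W ∈ paPrefixEvent n r k F, paMass n r α W) :
    PAValid k F ∧ paCondNu n r k α F = suffixExp n r α k (fun V => (paNu n r V : ℝ)) F := by
  have h1 := sum_prefixEvent_paMass hk α F (fun _ => 1)
  have h2 := sum_prefixEvent_paMass hk α F (fun V => (paNu n r V : ℝ))
  simp only [mul_one] at h1
  rw [paCondNu, h2, h1]
  rw [h1] at hF
  have hA := left_ne_zero_of_mul hF.ne'
  have hV : PAValid k F := by
    intro l i hl hlk
    have := Finset.prod_ne_zero_iff.1 (right_ne_zero_of_mul hA) l (Finset.mem_univ l)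
    rw [if_pos ⟨hl, hlk⟩] at this
    have := Finset.prod_ne_zero_iff.1 this i (Finset.mem_univ i)
    unfold paStep at this
    have : (F l i : ℕ) < l := by
      by_contra h
      exact this (if_neg h)
    omega
  refine ⟨hV, ?_⟩
  rw [suffixExp_one hr α hkn hk F hV, mul_one]
  exact mul_div_cancel_left₀ _ hA

/-- If two possible subgraphs `F`, `F'` of `Gₙ = G^{PA}_{r,α,n}` spanned by the first
`k` vertices (each occurring with positive probability) have the same restriction to
the first `k − 1` vertices, then the conditional expectations of the maximum directed
matching size differ by at most `2r`:
`|E[ν(Gₙ) | Gₙ(k) = F] − E[ν(Gₙ) | Gₙ(k) = F']| ≤ 2r`. -/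
theorem preferential_attachment_conditional_matching_bound
    (r : ℕ) (hr : 1 ≤ r) (α : ℝ) (hα : α ∈ Set.Ico (0 : ℝ) 1) (n k : ℕ)
    (hk : 1 ≤ k) (hkn : k ≤ n) (F F' : Fin n → Fin r → Fin n)
    (hF : 0 < ∑ W ∈ paPrefixEvent n r k F, paMass n r α W)
    (hF' : 0 < ∑ W ∈ paPrefixEvent n r k F', paMass n r α W)
    (hagree : ∀ l : Fin n, (l : ℕ) < k - 1 → F l = F' l) :
    |paCondNu n r k α F - paCondNu n r k α F'| ≤ 2 * r := by
  obtain ⟨hV, e⟩ := paCondNu_eq hr hk hkn α F hF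
  obtain ⟨hV', e'⟩ := paCondNu_eq hr hk hkn α F' hF'
  let a : Fin n := ⟨k - 1, by omega⟩
  have hR : PARelated (F a) (F' a) k F F' := by
    intro l i hl hlk
    by_cases h : (l : ℕ) < k - 1
    · exact Or.inl (by rw [hagree l h])
    · have : l = a := Fin.ext (show (l : ℕ) = k - 1 by omega)
      subst this
      exact Or.inr ⟨i, rfl, rfl⟩
  have hR' : PARelated (F' a) (F a) k F' F := by
    intro l i hl hlk
    rcases hR l i hl hlk with h | ⟨j, h, h'⟩
    · exact Or.inl h.symm
    · exact Or.inr ⟨j, h', h⟩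
  have b := suffixExp_nu_le hr hα hkn hk F F' hV hV' hR
  have b' := suffixExp_nu_le hr hα hkn hk F' F hV' hV hR'
  have hr0 : (0 : ℝ) ≤ r := Nat.cast_nonneg r
  rw [e, e', abs_le]
  constructor <;> linarith
end
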